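/- arXiv:2012.13515 — 2 statements merged into one kernel-verified Lean document; each statement's English description precedes it below -/
import Mathlib

section
/- Let E ⊆ ℝ² be compact, ε > 0, and x ∈ ∂E_ε. Then there exists r > 0 such that for each extremal pair (ξ, y) ∈ P_ext(x) there are a continuous function f^{ξ,y} : [0, ε/2] → ℝ, Lipschitz with constant 1/(√3·ε) on [0, r], and a closed set A_{ξ,y} ⊆ [0, ε/2], such that, writing g_{ξ,y}(s) := x + s·ξ + f^{ξ,y}(s)·(x − y), the map g_{ξ,y} is Lipschitz with constant 2/√3 on [0, r] and ∂E_ε ∩ closed-ball(x, r) = ⋃_{(ξ,y) ∈ P_ext(x)} g_{ξ,y}(A_{ξ,y}). Moreover, each A_{ξ,y} is either (a) an interval [0, s_{ξ,y}] with 0 < s_{ξ,y} ≤ ε/2, or (b) a closed set whose complement in [0, ε/2] contains a sequence of pairwise disjoint open intervals accumulating at 0; and if x is a wedge or x ∈ Unp(E), then case (a) holds for every extremal pair. -/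
open Metric Set Filter Topology RealInnerProductSpace

noncomputable section

/-- The Euclidean plane. -/
abbrev Plane := EuclideanSpace ℝ (Fin 2)

/-- The closed ε-neighbourhood of a set `E ⊆ ℝ²`: the closure of the union of open
ε-balls centred at points of `E`. -/
def eNbhd (E : Set Plane) (ε : ℝ) : Set Plane :=
  closure (⋃ y ∈ E, ball y ε)

/-- The set of contributors of a boundary point `x ∈ ∂E_ε`: points `y ∈ ∂E` with
`‖y - x‖ = ε`. -/
def contributors (E : Set Plane) (ε : ℝ) (x : Plane) : Set Plane :=
  {y ∈ frontier E | ‖y - x‖ = ε}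

/-- The set of outward directions from `E_ε` at `x`. -/
def outwardDirs (E : Set Plane) (ε : ℝ) (x : Plane) : Set Plane :=
  {ξ | ‖ξ‖ = 1 ∧ ∃ u : ℕ → Plane, (∀ n, u n ∉ eNbhd E ε) ∧
    Tendsto u atTop (nhds x) ∧
    Tendsto (fun n => (‖u n - x‖)⁻¹ • (u n - x)) atTop (nhds ξ)}

/-- The set of extremal outward directions at `x`: outward directions perpendicular to
`y - x` for some contributor `y`. -/
def extOutward (E : Set Plane) (ε : ℝ) (x : Plane) : Set Plane :=
  {ξ ∈ outwardDirs E ε x | ∃ y ∈ contributors E ε x, ⟪y - x, ξ⟫ = 0}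

/-- The set of extremal contributors at `x`: contributors perpendicular to some
outward direction. -/
def extContrib (E : Set Plane) (ε : ℝ) (x : Plane) : Set Plane :=
  {y ∈ contributors E ε x | ∃ ξ ∈ outwardDirs E ε x, ⟪y - x, ξ⟫ = 0}

/-- The set of extremal pairs at `x`. -/
def extPairs (E : Set Plane) (ε : ℝ) (x : Plane) : Set (Plane × Plane) :=
  {p | p.1 ∈ outwardDirs E ε x ∧ p.2 ∈ contributors E ε x ∧ ⟪p.2 - x, p.1⟫ = 0}

/-- The set `Unp(E)` of boundary points of `E_ε` with a unique contributor. -/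
def unp (E : Set Plane) (ε : ℝ) : Set Plane :=
  {x ∈ frontier (eNbhd E ε) | ∃ y, contributors E ε x = {y}}

/-- A boundary point `x ∈ ∂E_ε` is smooth if `x ∈ Unp(E)` and a whole neighbourhood of
`x` on the boundary consists of points of `Unp(E)`. -/
def IsSmoothPt (E : Set Plane) (ε : ℝ) (x : Plane) : Prop :=
  x ∈ unp E ε ∧ ∃ r > 0, frontier (eNbhd E ε) ∩ ball x r ⊆ unp E ε

/-- A singularity: a non-smooth boundary point of `E_ε`. -/
def IsSingularity (E : Set Plane) (ε : ℝ) (x : Plane) : Prop :=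
  x ∈ frontier (eNbhd E ε) ∧ ¬ IsSmoothPt E ε x

/-- The open half-ball of radius `r` at `x` in direction `v`. -/
def halfBall (x v : Plane) (r : ℝ) : Set Plane :=
  {z ∈ ball x r | 0 < ⟪z - x, v⟫}

/-- `V` is a connected component of the complement of `E_ε`. -/
def IsCompOfCompl (E : Set Plane) (ε : ℝ) (V : Set Plane) : Prop :=
  ∃ z, z ∉ eNbhd E ε ∧ V = connectedComponentIn (eNbhd E ε)ᶜ z

/-- The closed geodesic arc-segment between `v, w ∈ S¹`. -/
def arcSeg (v w : Plane) : Set Plane :=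
  {u | ‖u‖ = 1 ∧ ∃ a b : ℝ, 0 ≤ a ∧ 0 ≤ b ∧ u = a • v + b • w}

/-- The open geodesic arc-segment between `v, w ∈ S¹`. -/
def openArc (v w : Plane) : Set Plane :=
  arcSeg v w \ {v, w}

/-- A chain sequence for `x`: a sequence of singularities converging to `x` whose
extremal contributors become increasingly opposed. -/
def IsChainSeq (E : Set Plane) (ε : ℝ) (x : Plane) (u : ℕ → Plane) : Prop :=
  (∀ n, IsSingularity E ε (u n)) ∧ (∀ n, u n ≠ x) ∧ Tendsto u atTop (nhds x) ∧
  ∃ y1 y2 : ℕ → Plane, (∀ n, extContrib E ε (u n) = {y1 n, y2 n}) ∧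
    Tendsto (fun n => ⟪ε⁻¹ • (y1 n - u n), ε⁻¹ • (y2 n - u n)⟫) atTop (nhds (-1))

/-- Type S1: wedge. -/
def IsWedge (E : Set Plane) (ε : ℝ) (x : Plane) : Prop :=
  IsSingularity E ε x ∧
  ∃ ξ₁ ξ₂, extOutward E ε x = {ξ₁, ξ₂} ∧ ξ₁ ≠ ξ₂ ∧ ξ₁ ≠ -ξ₂

/-- Type S2: one-sided sharp singularity. -/
def IsSharp (E : Set Plane) (ε : ℝ) (x : Plane) : Prop :=
  IsSingularity E ε x ∧ (∃ ξ, extOutward E ε x = {ξ}) ∧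
  ∃ δ > 0, IsConnected (ball x δ ∩ (eNbhd E ε)ᶜ)

/-- Type S3: sharp-sharp singularity. -/
def IsSharpSharp (E : Set Plane) (ε : ℝ) (x : Plane) : Prop :=
  IsSingularity E ε x ∧ ∃ ξ, extOutward E ε x = {ξ, -ξ} ∧
    ∀ η ∈ ({ξ, -ξ} : Set Plane), ∃ δ > 0, IsConnected (halfBall x η δ ∩ (eNbhd E ε)ᶜ)

/-- Type S4: one-sided shallow singularity. -/
def IsShallow (E : Set Plane) (ε : ℝ) (x : Plane) : Prop :=
  IsSingularity E ε x ∧ x ∈ unp E ε ∧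
  ∃ ξ₁ ξ₂, extOutward E ε x = {ξ₁, ξ₂} ∧
    (∃ δ > 0, halfBall x ξ₁ δ ∩ frontier (eNbhd E ε) ⊆ unp E ε) ∧
    (∀ δ > 0, ¬ (halfBall x ξ₂ δ ∩ frontier (eNbhd E ε) ⊆ unp E ε))

/-- Type S5: shallow-shallow singularity. -/
def IsShallowShallow (E : Set Plane) (ε : ℝ) (x : Plane) : Prop :=
  IsSingularity E ε x ∧ x ∈ unp E ε ∧
  ∃ ξ₁ ξ₂, extOutward E ε x = {ξ₁, ξ₂} ∧
    ∀ η ∈ ({ξ₁, ξ₂} : Set Plane), ∀ δ > 0,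
      ¬ (halfBall x η δ ∩ frontier (eNbhd E ε) ⊆ unp E ε)

/-- Type S6: one-sided chain singularity. -/
def IsChainSing (E : Set Plane) (ε : ℝ) (x : Plane) : Prop :=
  IsSingularity E ε x ∧ (∃ ξ, extOutward E ε x = {ξ}) ∧
  ∃ u, IsChainSeq E ε x u

/-- Type S7: chain-chain singularity. -/
def IsChainChain (E : Set Plane) (ε : ℝ) (x : Plane) : Prop :=
  IsSingularity E ε x ∧ ∃ ξ, extOutward E ε x = {ξ, -ξ} ∧
    ∀ η ∈ ({ξ, -ξ} : Set Plane), ∃ δ > 0, ∃ u,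
      IsChainSeq E ε x u ∧ ∀ n, u n ∈ halfBall x η δ

/-- Type S8: sharp-chain singularity. -/
def IsSharpChain (E : Set Plane) (ε : ℝ) (x : Plane) : Prop :=
  IsSingularity E ε x ∧ ∃ ξ, extOutward E ε x = {ξ, -ξ} ∧
    (∃ δ > 0, IsConnected (halfBall x ξ δ ∩ (eNbhd E ε)ᶜ)) ∧
    (∃ δ > 0, ∃ u, IsChainSeq E ε x u ∧ ∀ n, u n ∈ halfBall x (-ξ) δ)

/-!
Near `x` only points of `E` close to extremal contributors matter: if boundary points `z k → x`
have contributors `w k`, every limit point of (direction of `z k - x`, `w k`) is an extremal pair,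
by compactness. Near `x` the boundary therefore lies on finitely many graphs: that of an extremal
pair `(ξ, y)` is the upper envelope, over the tangent direction `ξ`, of the upper arcs of radius `ε`
about the points of `E` near `y`. Over `[0, ε / 4]` the arcs have slope at most `1 / √3`, hence so
has the envelope, and the distance to `x` increases strictly along its graph.

For a fixed pair, either the graph eventually stays on the boundary as `s → 0⁺`, and the parameters
form an interval, or it leaves the boundary for arbitrarily small `s`; since the boundary is closed,
this opens gaps accumulating at `0`. At a wedge or at a point with a unique contributor the antipode
`x + (x - y)` is not in `E`. Then a thin cone around `ξ` avoids the `ε`-balls of all points of `E`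
except those near `y`. As the graph is tangent to `ξ`, the points just above it lie in this cone
and outside `E_ε`, so that the first case holds.
-/

open scoped EuclideanSpace

theorem exists_pairwise_disjoint_Ioo_tendsto {U : Set ℝ} (hU : IsOpen U)
    (h : ∃ᶠ s in 𝓝[>] (0 : ℝ), s ∈ U) :
    ∃ I : ℕ → ℝ × ℝ, (∀ k, (I k).1 < (I k).2) ∧ (∀ k, Ioo (I k).1 (I k).2 ⊆ U) ∧
      (Pairwise fun m k => Disjoint (Ioo (I m).1 (I m).2) (Ioo (I k).1 (I k).2)) ∧
      Tendsto (fun k => (I k).2) atTop (𝓝 0) := by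
  obtain ⟨u, hu, huU⟩ := exists_seq_forall_of_frequently
    (h.and_eventually eventually_mem_nhdsWithin)
  obtain ⟨φ, hφ_mono, hφ⟩ := strictMono_subseq_of_tendsto_atTop (tendsto_inv_nhdsGT_zero.comp hu)
  have hanti : StrictAnti (u ∘ φ) := fun m k hmk =>
    (inv_lt_inv₀ (huU (φ m)).2 (huU (φ k)).2).1 (hφ hmk)
  have hleft (k : ℕ) : ∃ l ∈ Ico (u (φ (k + 1))) (u (φ k)), Ioc l (u (φ k)) ⊆ U :=
    exists_Ioc_subset_of_mem_nhds' (hU.mem_nhds (huU (φ k)).1) (hanti k.lt_succ_self)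
  choose l hl hlU using hleft
  refine ⟨fun k => (l k, u (φ k)), fun k => (hl k).2,
    fun k => Ioo_subset_Ioc_self.trans (hlU k), ?_, ?_⟩
  · exact hanti.antitone.pairwise_disjoint_on_Ioo_succ.mono fun m k hmk =>
      hmk.mono (Ioo_subset_Ioo_left (hl m).1) (Ioo_subset_Ioo_left (hl k).1)
  · exact (tendsto_nhdsWithin_iff.1 hu).1.comp hφ_mono.tendsto_atTop

theorem inter_frontier_nonempty_of_isPreconnected {X : Type*} [TopologicalSpace X] {C s : Set X}
    (hC : IsPreconnected C) (hs : (C ∩ s).Nonempty) (hsc : (C \ s).Nonempty) :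
    (C ∩ frontier s).Nonempty := by
  have := isPreconnected_iff_preconnectedSpace.1 hC
  obtain ⟨a, haC, has⟩ := hs
  obtain ⟨b, hbC, hbs⟩ := hsc
  obtain ⟨z, hz⟩ := nonempty_frontier_iff.2 (⟨⟨⟨a, haC⟩, has⟩,
    (ne_univ_iff_exists_notMem _).2 ⟨⟨b, hbC⟩, hbs⟩⟩ :
      ((↑) ⁻¹' s : Set C).Nonempty ∧ ((↑) ⁻¹' s : Set C) ≠ univ)
  exact ⟨z, z.2, continuous_subtype_val.frontier_preimage_subset s hz⟩

theorem lipschitzOnWith_sSup_image {ι α : Type*} [PseudoMetricSpace α] {f : ι → α → ℝ}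
    {K : Set ι} {t : Set α} {C : NNReal} (hK : K.Nonempty)
    (hbdd : ∀ a ∈ t, BddAbove ((f · a) '' K)) (hf : ∀ i ∈ K, LipschitzOnWith C (f i) t) :
    LipschitzOnWith C (fun a => sSup ((f · a) '' K)) t := by
  refine LipschitzOnWith.of_le_add_mul C fun a ha b hb => csSup_le (hK.image _) ?_
  rintro _ ⟨i, hi, rfl⟩
  calc f i a ≤ f i b + C * dist a b := (hf i hi).le_add_mul ha hb
    _ ≤ sSup ((f · b) '' K) + C * dist a b := by
      gcongr
      exact le_csSup (hbdd b hb) (mem_image_of_mem _ hi)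

section InnerProduct

variable {V : Type*} [NormedAddCommGroup V] [InnerProductSpace ℝ V]

theorem norm_sub_le_norm_sub_iff_sq_le_inner (e x z : V) :
    ‖e - z‖ ≤ ‖e - x‖ ↔ ‖z - x‖ ^ 2 ≤ 2 * ⟪e - x, z - x⟫ := by
  rw [← sq_le_sq₀ (norm_nonneg _) (norm_nonneg _), ← sub_sub_sub_cancel_right e z x,
    norm_sub_sq_real]
  constructor <;> intro h <;> linarith

variable {ξ n : V}

theorem orthonormal_pair_iff :
    Orthonormal ℝ ![ξ, n] ↔ ‖ξ‖ = 1 ∧ ‖n‖ = 1 ∧ ⟪ξ, n⟫ = 0 := by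
  simp [orthonormal_vecCons_iff, and_comm]

theorem abs_inner_le_norm_of_norm_eq_one (hn : ‖n‖ = 1) (v : V) : |⟪v, n⟫| ≤ ‖v‖ := by
  simpa only [hn, mul_one] using abs_real_inner_le_norm v n

theorem norm_smul_add_smul_sq (h : Orthonormal ℝ ![ξ, n]) (s t : ℝ) :
    ‖s • ξ + t • n‖ ^ 2 = s ^ 2 + t ^ 2 := by
  obtain ⟨hξ, hn, hξn⟩ := orthonormal_pair_iff.1 h
  rw [norm_add_sq_real, real_inner_smul_left, real_inner_smul_right, hξn, norm_smul, norm_smul,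
    hξ, hn, mul_one, mul_one, Real.norm_eq_abs, Real.norm_eq_abs, sq_abs, sq_abs]
  ring

theorem inner_smul_add_smul_fst (h : Orthonormal ℝ ![ξ, n]) (s t : ℝ) :
    ⟪s • ξ + t • n, ξ⟫ = s := by
  obtain ⟨hξ, -, hξn⟩ := orthonormal_pair_iff.1 h
  rw [inner_add_left, real_inner_smul_left, real_inner_smul_left, real_inner_self_eq_norm_sq, hξ,
    real_inner_comm, hξn, one_pow, mul_one, mul_zero, add_zero]

theorem inner_smul_add_smul_snd (h : Orthonormal ℝ ![ξ, n]) (s t : ℝ) :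
    ⟪s • ξ + t • n, n⟫ = t := by
  obtain ⟨-, hn, hξn⟩ := orthonormal_pair_iff.1 h
  rw [inner_add_left, real_inner_smul_left, real_inner_smul_left, real_inner_self_eq_norm_sq, hn,
    hξn, one_pow, mul_one, mul_zero, zero_add]

variable [Fact (Module.finrank ℝ V = 2)]

theorem inner_smul_add_inner_smul_eq (h : Orthonormal ℝ ![ξ, n]) (v : V) :
    ⟪v, ξ⟫ • ξ + ⟪v, n⟫ • n = v := by
  have hcard : Fintype.card (Fin 2) = Module.finrank ℝ V := by
    rw [Fintype.card_fin, Fact.out (p := Module.finrank ℝ V = 2)]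
  let b := (basisOfOrthonormalOfCardEqFinrank h hcard).toOrthonormalBasis (by simpa using h)
  simpa [b, Fin.sum_univ_two, real_inner_comm] using b.sum_repr' v

theorem norm_sub_smul_add_smul_sq (h : Orthonormal ℝ ![ξ, n]) (v : V) (s t : ℝ) :
    ‖v - (s • ξ + t • n)‖ ^ 2 = (⟪v, ξ⟫ - s) ^ 2 + (⟪v, n⟫ - t) ^ 2 := by
  rw [← norm_smul_add_smul_sq h]
  nth_rw 1 [← inner_smul_add_inner_smul_eq h v]
  congr 2
  module

theorem norm_sq_eq_inner_sq_add_inner_sq (h : Orthonormal ℝ ![ξ, n]) (v : V) :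
    ‖v‖ ^ 2 = ⟪v, ξ⟫ ^ 2 + ⟪v, n⟫ ^ 2 := by
  simpa only [zero_smul, add_zero, sub_zero] using norm_sub_smul_add_smul_sq h v 0 0

theorem eq_or_eq_neg_of_inner_eq_zero (h : Orthonormal ℝ ![ξ, n]) {ζ : V} (hζ : ‖ζ‖ = 1)
    (hζn : ⟪ζ, n⟫ = 0) : ζ = ξ ∨ ζ = -ξ := by
  have hsq : ⟪ζ, ξ⟫ ^ 2 = 1 := by
    simpa only [hζ, hζn, one_pow, ne_eq, OfNat.ofNat_ne_zero, not_false_eq_true, zero_pow,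
      add_zero] using (norm_sq_eq_inner_sq_add_inner_sq h ζ).symm
  have hζξ : ⟪ζ, ξ⟫ • ξ = ζ := by
    simpa only [hζn, zero_smul, add_zero] using inner_smul_add_inner_smul_eq h ζ
  rcases sq_eq_one_iff.1 hsq with h1 | h1
  · exact Or.inl (by rw [← hζξ, h1, one_smul])
  · exact Or.inr (by rw [← hζξ, h1, neg_one_smul])

end InnerProduct

section Arcs

variable {V : Type*} [NormedAddCommGroup V] [InnerProductSpace ℝ V]

/-- In the orthonormal frame `(ξ, n)` at `x`, the height over the abscissa `s` of the upper
semicircle of radius `ε` about `e`. It is meaningful for `|s - ⟪e - x, ξ⟫| ≤ ε`; elsewhere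
`Real.sqrt` makes it the height of the centre. -/
def upperArc (ε : ℝ) (x ξ n e : V) (s : ℝ) : ℝ :=
  ⟪e - x, n⟫ + √(ε ^ 2 - (s - ⟪e - x, ξ⟫) ^ 2)

/-- The upper envelope of the upper semicircles of radius `ε` about the points of `K`. -/
def upperEnvelope (ε : ℝ) (K : Set V) (x ξ n : V) (s : ℝ) : ℝ :=
  sSup ((upperArc ε x ξ n · s) '' K)

variable {ε : ℝ} {K : Set V} {x ξ n e : V} {s t : ℝ}

theorem continuous_upperArc : Continuous fun q : ℝ × V => upperArc ε x ξ n q.2 q.1 := by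
  unfold upperArc
  fun_prop

theorem bddAbove_upperArc (hK : IsCompact K) (s : ℝ) :
    BddAbove ((upperArc ε x ξ n · s) '' K) :=
  hK.bddAbove_image (continuous_upperArc.comp (Continuous.prodMk_right s)).continuousOn

theorem continuous_upperEnvelope (hK : IsCompact K) : Continuous (upperEnvelope ε K x ξ n) :=
  hK.continuous_sSup continuous_upperArc

theorem abs_sqrt_sq_sub_sq_sub_le (hε : 0 < ε) {u v : ℝ} (hu : |u| ≤ ε / 2) (hv : |v| ≤ ε / 2) :
    |√(ε ^ 2 - u ^ 2) - √(ε ^ 2 - v ^ 2)| ≤ 1 / √3 * |u - v| := by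
  have hsqrt {w : ℝ} (hw : |w| ≤ ε / 2) : √3 / 2 * ε ≤ √(ε ^ 2 - w ^ 2) := by
    refine Real.le_sqrt_of_sq_le ?_
    rw [mul_pow, div_pow, Real.sq_sqrt (by norm_num)]
    nlinarith [sq_le_sq' (abs_le.1 hw).1 (abs_le.1 hw).2]
  have hP := hsqrt hu
  have hQ := hsqrt hv
  have hsq {w : ℝ} (hw : |w| ≤ ε / 2) : √(ε ^ 2 - w ^ 2) ^ 2 = ε ^ 2 - w ^ 2 :=
    Real.sq_sqrt (by nlinarith [sq_le_sq' (abs_le.1 hw).1 (abs_le.1 hw).2])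
  have hprod : (√(ε ^ 2 - u ^ 2) - √(ε ^ 2 - v ^ 2)) * (√(ε ^ 2 - u ^ 2) + √(ε ^ 2 - v ^ 2)) =
      -((u + v) * (u - v)) := by
    linear_combination hsq hu - hsq hv
  have hsum : 0 < √3 * ε := by positivity
  refine le_of_mul_le_mul_right ?_ hsum
  calc |√(ε ^ 2 - u ^ 2) - √(ε ^ 2 - v ^ 2)| * (√3 * ε)
      ≤ |√(ε ^ 2 - u ^ 2) - √(ε ^ 2 - v ^ 2)| * |√(ε ^ 2 - u ^ 2) + √(ε ^ 2 - v ^ 2)| := by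
        gcongr
        exact le_trans (by linarith) (le_abs_self _)
    _ = |u + v| * |u - v| := by
        rw [← abs_mul, ← abs_mul, hprod, abs_neg]
    _ ≤ ε * |u - v| := by
        gcongr
        linarith [abs_add_le u v]
    _ = 1 / √3 * |u - v| * (√3 * ε) := by field_simp

theorem lipschitzOnWith_upperArc (hε : 0 < ε) {T : Set ℝ}
    (hT : ∀ s ∈ T, |s - ⟪e - x, ξ⟫| ≤ ε / 2) :
    LipschitzOnWith (Real.toNNReal (1 / √3)) (upperArc ε x ξ n e) T :=
  LipschitzOnWith.of_dist_le_mul fun s hs t ht => by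
    rw [Real.coe_toNNReal _ (by positivity), Real.dist_eq, Real.dist_eq, upperArc, upperArc,
      add_sub_add_left_eq_sub, ← sub_sub_sub_cancel_right s t ⟪e - x, ξ⟫]
    exact abs_sqrt_sq_sub_sq_sub_le hε (hT s hs) (hT t ht)

theorem lipschitzOnWith_upperEnvelope (hε : 0 < ε) (hK : IsCompact K) (hKne : K.Nonempty)
    {T : Set ℝ} (hT : ∀ e ∈ K, ∀ s ∈ T, |s - ⟪e - x, ξ⟫| ≤ ε / 2) :
    LipschitzOnWith (Real.toNNReal (1 / √3)) (upperEnvelope ε K x ξ n) T :=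
  lipschitzOnWith_sSup_image hKne (fun s _ => bddAbove_upperArc hK s) fun e he =>
    lipschitzOnWith_upperArc hε (hT e he)

variable [Fact (Module.finrank ℝ V = 2)]

theorem norm_sub_add_smul_add_smul_sq (h : Orthonormal ℝ ![ξ, n]) (e x : V) (s t : ℝ) :
    ‖e - (x + s • ξ + t • n)‖ ^ 2 = (⟪e - x, ξ⟫ - s) ^ 2 + (⟪e - x, n⟫ - t) ^ 2 := by
  rw [add_assoc, ← sub_sub, norm_sub_smul_add_smul_sq h]

theorem le_upperArc_iff (hε : 0 ≤ ε) (h : Orthonormal ℝ ![ξ, n]) (ht : ⟪e - x, n⟫ < t) :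
    t ≤ upperArc ε x ξ n e s ↔ ‖e - (x + s • ξ + t • n)‖ ≤ ε := by
  rw [upperArc, ← sub_le_iff_le_add', Real.le_sqrt' (sub_pos.2 ht),
    ← sq_le_sq₀ (norm_nonneg _) hε, norm_sub_add_smul_add_smul_sq h, le_sub_iff_add_le,
    ← neg_sub t, neg_sq, ← neg_sub s, neg_sq, add_comm]

theorem lt_upperArc_iff (hε : 0 ≤ ε) (h : Orthonormal ℝ ![ξ, n]) (ht : ⟪e - x, n⟫ < t) :
    t < upperArc ε x ξ n e s ↔ ‖e - (x + s • ξ + t • n)‖ < ε := by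
  rw [upperArc, ← sub_lt_iff_lt_add', Real.lt_sqrt (sub_pos.2 ht).le,
    ← sq_lt_sq₀ (norm_nonneg _) hε, norm_sub_add_smul_add_smul_sq h, lt_sub_iff_add_lt,
    ← neg_sub t, neg_sq, ← neg_sub s, neg_sq, add_comm]

theorem le_upperEnvelope_iff (hε : 0 ≤ ε) (h : Orthonormal ℝ ![ξ, n]) (hK : IsCompact K)
    (hKne : K.Nonempty) (ht : ∀ e ∈ K, ⟪e - x, n⟫ < t) :
    t ≤ upperEnvelope ε K x ξ n s ↔ ∃ e ∈ K, ‖e - (x + s • ξ + t • n)‖ ≤ ε := by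
  constructor
  · intro hle
    obtain ⟨e, he, hsup, -⟩ := hK.exists_sSup_image_eq_and_ge hKne
      (continuous_upperArc.comp (Continuous.prodMk_right s)).continuousOn
    exact ⟨e, he, (le_upperArc_iff hε h (ht e he)).1 (hle.trans_eq hsup)⟩
  · rintro ⟨e, he, hle⟩
    exact ((le_upperArc_iff hε h (ht e he)).2 hle).trans
      (le_csSup (bddAbove_upperArc hK s) (mem_image_of_mem _ he))

theorem lt_upperEnvelope_iff (hε : 0 ≤ ε) (h : Orthonormal ℝ ![ξ, n]) (hK : IsCompact K)
    (hKne : K.Nonempty) (ht : ∀ e ∈ K, ⟪e - x, n⟫ < t) :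
    t < upperEnvelope ε K x ξ n s ↔ ∃ e ∈ K, ‖e - (x + s • ξ + t • n)‖ < ε := by
  rw [upperEnvelope, lt_csSup_iff (bddAbove_upperArc hK s) (hKne.image _), exists_mem_image]
  exact exists_congr fun e => and_congr_right fun he => lt_upperArc_iff hε h (ht e he)

end Arcs

section Neighbourhood

variable {E : Set Plane} {ε : ℝ} {x z : Plane}

theorem isClosed_eNbhd (E : Set Plane) (ε : ℝ) : IsClosed (eNbhd E ε) :=
  isClosed_closure

theorem mem_eNbhd_iff (hE : IsClosed E) (hε : 0 < ε) :
    z ∈ eNbhd E ε ↔ ∃ e ∈ E, ‖e - z‖ ≤ ε := by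
  rw [eNbhd, ← thickening_eq_biUnion_ball, closure_thickening hε,
    hE.cthickening_eq_biUnion_closedBall hε.le]
  simp only [mem_iUnion, mem_closedBall, dist_comm z, dist_eq_norm, exists_prop]

theorem le_norm_sub_of_mem_frontier (hz : z ∈ frontier (eNbhd E ε)) {e : Plane} (he : e ∈ E) :
    ε ≤ ‖e - z‖ := by
  by_contra! hlt
  have hsub : ball e ε ⊆ eNbhd E ε :=
    (subset_biUnion_of_mem (u := (ball · ε)) he).trans subset_closure
  exact hz.2 (interior_maximal hsub isOpen_ball (by rwa [mem_ball, dist_comm, dist_eq_norm]))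

theorem exists_norm_sub_eq_of_mem_frontier (hE : IsClosed E) (hε : 0 < ε)
    (hz : z ∈ frontier (eNbhd E ε)) : ∃ e ∈ E, ‖e - z‖ = ε := by
  obtain ⟨e, he, hle⟩ := (mem_eNbhd_iff hE hε).1 ((isClosed_eNbhd E ε).frontier_subset hz)
  exact ⟨e, he, hle.antisymm (le_norm_sub_of_mem_frontier hz he)⟩

theorem mem_contributors_iff (hE : IsClosed E) (hε : 0 < ε) (hx : x ∈ frontier (eNbhd E ε))
    {y : Plane} : y ∈ contributors E ε x ↔ y ∈ E ∧ ‖y - x‖ = ε := by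
  refine ⟨fun hy => ⟨hE.frontier_subset hy.1, hy.2⟩, fun hy => ⟨⟨subset_closure hy.1, ?_⟩, hy.2⟩⟩
  have hsub : E ⊆ (ball x ε)ᶜ := fun e he hmem =>
    (le_norm_sub_of_mem_frontier hx he).not_gt (by rwa [mem_ball, dist_eq_norm] at hmem)
  intro hy_interior
  have hmem := interior_mono hsub hy_interior
  rw [interior_compl, closure_ball x hε.ne', mem_compl_iff, mem_closedBall, dist_eq_norm] at hmem
  exact hmem hy.2.le

theorem inner_nonpos_of_mem_outwardDirs (hE : IsClosed E) (hε : 0 < ε) {ξ : Plane}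
    (hξ : ξ ∈ outwardDirs E ε x) {e : Plane} (he : e ∈ E) (hex : ‖e - x‖ ≤ ε) :
    ⟪e - x, ξ⟫ ≤ 0 := by
  obtain ⟨-, u, hu, hux, hdir⟩ := hξ
  have hlim := (tendsto_const_nhds (x := e - x)).inner (𝕜 := ℝ) hdir
  have hbound : Tendsto (fun k => ‖u k - x‖ / 2) atTop (𝓝 0) := by
    simpa using ((hux.sub_const x).norm).div_const 2
  refine le_of_tendsto_of_tendsto' hlim hbound fun k => ?_
  have hlt : 2 * ⟪e - x, u k - x⟫ < ‖u k - x‖ ^ 2 := by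
    rw [← not_le, ← norm_sub_le_norm_sub_iff_sq_le_inner]
    exact fun hle => hu k ((mem_eNbhd_iff hE hε).2 ⟨e, he, hle.trans hex⟩)
  have hpos : 0 < ‖u k - x‖ := norm_sub_pos_iff.2 fun h => by simp [h] at hlt
  rw [real_inner_smul_right, inv_mul_le_iff₀ hpos]
  linarith

theorem mem_frontier_of_mem_extPairs (hE : IsClosed E) (hε : 0 < ε) {p : Plane × Plane}
    (hp : p ∈ extPairs E ε x) : x ∈ frontier (eNbhd E ε) := by
  obtain ⟨⟨-, u, hu, hux, -⟩, ⟨hy, hyx⟩, -⟩ := hp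
  refine ⟨subset_closure ((mem_eNbhd_iff hE hε).2 ⟨p.2, hE.frontier_subset hy, hyx.le⟩), ?_⟩
  rw [← mem_compl_iff, ← closure_compl]
  exact mem_closure_of_tendsto hux (Eventually.of_forall hu)

theorem eventually_forall_mem_of_norm_sub_le {D U : Set Plane} (hD : IsClosed D) (hε : 0 < ε)
    (hU : IsOpen U) (h : ∀ e ∈ D, ‖e - x‖ ≤ ε → e ∈ U) :
    ∀ᶠ z in 𝓝 x, ∀ e ∈ D, ‖e - z‖ ≤ ε → e ∈ U := by
  have hDU : IsClosed (D \ U) := hD.sdiff hU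
  have hx : x ∉ eNbhd (D \ U) ε := fun hmem =>
    have ⟨e, he, hex⟩ := (mem_eNbhd_iff hDU hε).1 hmem
    he.2 (h e he.1 hex)
  filter_upwards [(isClosed_eNbhd (D \ U) ε).isOpen_compl.mem_nhds hx] with z hz e he hez
  by_contra heU
  exact hz ((mem_eNbhd_iff hDU hε).2 ⟨e, ⟨he, heU⟩, hez⟩)

theorem exists_mem_sphere_mem_eNbhd (hE : IsClosed E) (hε : 0 < ε)
    (hx : x ∈ frontier (eNbhd E ε)) {ρ : ℝ} (hρ : 0 ≤ ρ) (hρε : ρ ≤ ε) :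
    (sphere x ρ ∩ eNbhd E ε).Nonempty := by
  obtain ⟨e, he, hex⟩ := exists_norm_sub_eq_of_mem_frontier hE hε hx
  refine ⟨x + (ρ / ε) • (e - x), ?_, (mem_eNbhd_iff hE hε).2 ⟨e, he, ?_⟩⟩
  · rw [mem_sphere, dist_self_add_left, norm_smul_of_nonneg (by positivity), hex,
      div_mul_cancel₀ _ hε.ne']
  · have hle : ρ / ε ≤ 1 := (div_le_one hε).2 hρε
    calc ‖e - (x + (ρ / ε) • (e - x))‖ = ‖(1 - ρ / ε) • (e - x)‖ := by congr 1; module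
      _ = (1 - ρ / ε) * ε := by rw [norm_smul_of_nonneg (sub_nonneg.2 hle), hex]
      _ ≤ ε := mul_le_of_le_one_left hε.le (sub_le_self _ (by positivity))

theorem accPt_frontier (hE : IsClosed E) (hε : 0 < ε) (hx : x ∈ frontier (eNbhd E ε)) :
    AccPt x (𝓟 (frontier (eNbhd E ε))) := by
  rw [accPt_iff_frequently_nhdsNE, frequently_iff]
  intro N hN
  obtain ⟨r, hr, hrN⟩ := mem_nhdsWithin_iff.1 hN
  have hxcl : x ∈ closure (eNbhd E ε)ᶜ := by rw [closure_compl]; exact hx.2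
  obtain ⟨u, hu, hxu⟩ := Metric.mem_closure_iff.1 hxcl (min r ε) (by positivity)
  obtain ⟨hur, huε⟩ := lt_min_iff.1 hxu
  have hxE := (isClosed_eNbhd E ε).frontier_subset hx
  have hρ : 0 < dist x u := dist_pos.2 fun h => hu (h ▸ hxE)
  have hsphere : IsPreconnected (sphere x (dist x u)) := isPreconnected_sphere
    (Module.lt_rank_of_lt_finrank (by rw [finrank_euclideanSpace_fin]; norm_num)) x _
  obtain ⟨z, hzx, hz⟩ := inter_frontier_nonempty_of_isPreconnected hsphere
    (exists_mem_sphere_mem_eNbhd hE hε hx hρ.le huε.le) ⟨u, mem_sphere'.2 rfl, hu⟩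
  exact ⟨z, hrN ⟨mem_ball.2 (mem_sphere.1 hzx ▸ hur), ne_of_mem_sphere hzx hρ.ne'⟩, hz⟩

end Neighbourhood

section ExtremalPairs

variable {E : Set Plane} {ε : ℝ} {x : Plane}

theorem mem_outwardDirs_of_tendsto {z : ℕ → Plane} {ξ : Plane}
    (hz : ∀ k, z k ∈ frontier (eNbhd E ε)) (hzx : ∀ k, z k ≠ x) (hlim : Tendsto z atTop (𝓝 x))
    (hdir : Tendsto (fun k => ‖z k - x‖⁻¹ • (z k - x)) atTop (𝓝 ξ)) :
    ξ ∈ outwardDirs E ε x := by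
  have hcont (k : ℕ) : ContinuousAt (fun v => (v, ‖v - x‖⁻¹ • (v - x))) (z k) := by
    have hne : ‖z k - x‖ ≠ 0 := norm_ne_zero_iff.2 (sub_ne_zero.2 (hzx k))
    fun_prop (disch := exact hne)
  have hnear (k : ℕ) : ∃ u ∈ (eNbhd E ε)ᶜ,
      dist (u, ‖u - x‖⁻¹ • (u - x)) (z k, ‖z k - x‖⁻¹ • (z k - x)) < 1 / (k + 1) := by
    have hcl : z k ∈ closure (eNbhd E ε)ᶜ := by rw [closure_compl]; exact (hz k).2
    exact ((mem_closure_iff_frequently.1 hcl).and_eventually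
      (hcont k (ball_mem_nhds _ Nat.one_div_pos_of_nat))).exists
  choose u hu hud using hnear
  have hprod : Tendsto (fun k => (u k, ‖u k - x‖⁻¹ • (u k - x))) atTop (𝓝 (x, ξ)) :=
    tendsto_of_tendsto_of_dist (hlim.prodMk_nhds hdir) <|
      squeeze_zero (fun _ => dist_nonneg) (fun k => (dist_comm _ _).trans_le (hud k).le)
        tendsto_one_div_add_atTop_nhds_zero_nat
  rw [nhds_prod_eq, tendsto_prod_iff'] at hprod
  refine ⟨?_, u, hu, hprod.1, hprod.2⟩
  refine tendsto_nhds_unique hdir.norm (tendsto_const_nhds.congr fun k => ?_)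
  exact (norm_smul_inv_norm (𝕜 := ℝ) (sub_ne_zero.2 (hzx k))).symm

theorem mem_extPairs_of_tendsto (hE : IsClosed E) (hε : 0 < ε) {z w : ℕ → Plane}
    {p : Plane × Plane} (hz : ∀ k, z k ∈ frontier (eNbhd E ε)) (hzx : ∀ k, z k ≠ x)
    (hlim : Tendsto z atTop (𝓝 x))
    (hdir : Tendsto (fun k => ‖z k - x‖⁻¹ • (z k - x)) atTop (𝓝 p.1))
    (hw : ∀ k, w k ∈ E) (hwz : ∀ k, ‖w k - z k‖ = ε) (hwlim : Tendsto w atTop (𝓝 p.2)) :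
    p ∈ extPairs E ε x := by
  have hξ := mem_outwardDirs_of_tendsto hz hzx hlim hdir
  have hx : x ∈ frontier (eNbhd E ε) :=
    isClosed_frontier.mem_of_tendsto hlim (Eventually.of_forall hz)
  have hy : p.2 ∈ E := hE.mem_of_tendsto hwlim (Eventually.of_forall hw)
  have hyx : ‖p.2 - x‖ = ε := tendsto_nhds_unique (hwlim.sub hlim).norm (by simp [hwz])
  refine ⟨hξ, (mem_contributors_iff hE hε hx).2 ⟨hy, hyx⟩,
    (inner_nonpos_of_mem_outwardDirs hE hε hξ hy hyx.le).antisymm ?_⟩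
  have hinner := (hwlim.sub_const x).inner (𝕜 := ℝ) hdir
  refine ge_of_tendsto' hinner fun k => ?_
  have hle : ‖z k - x‖ ^ 2 ≤ 2 * ⟪w k - x, z k - x⟫ :=
    (norm_sub_le_norm_sub_iff_sq_le_inner _ _ _).1
      ((hwz k).trans_le (le_norm_sub_of_mem_frontier hx (hw k)))
  rw [real_inner_smul_right]
  have := sq_nonneg ‖z k - x‖
  exact mul_nonneg (by positivity) (by linarith)

theorem exists_subseq_tendsto_extPairs (hE : IsClosed E) (hε : 0 < ε) {z w : ℕ → Plane}
    (hz : ∀ k, z k ∈ frontier (eNbhd E ε)) (hzx : ∀ k, z k ≠ x) (hlim : Tendsto z atTop (𝓝 x))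
    (hw : ∀ k, w k ∈ E) (hwz : ∀ k, ‖w k - z k‖ = ε) :
    ∃ p ∈ extPairs E ε x, ∃ φ : ℕ → ℕ, StrictMono φ ∧
      Tendsto (fun k => ‖z (φ k) - x‖⁻¹ • (z (φ k) - x)) atTop (𝓝 p.1) ∧
      Tendsto (w ∘ φ) atTop (𝓝 p.2) := by
  have hbdd : Bornology.IsBounded (sphere (0 : Plane) 1 ×ˢ cthickening ε (range z)) :=
    isBounded_sphere.prod (isBounded_range_of_tendsto z hlim).cthickening
  obtain ⟨p, -, φ, hφ, hp⟩ := tendsto_subseq_of_bounded hbdd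
    (x := fun k => (‖z k - x‖⁻¹ • (z k - x), w k)) fun k =>
      ⟨mem_sphere_zero_iff_norm.2 (norm_smul_inv_norm (𝕜 := ℝ) (sub_ne_zero.2 (hzx k))),
        mem_cthickening_of_dist_le _ (z k) _ _ (mem_range_self k)
          (by rw [dist_eq_norm, hwz k])⟩
  rw [nhds_prod_eq, tendsto_prod_iff'] at hp
  exact ⟨p, mem_extPairs_of_tendsto hE hε (fun k => hz (φ k)) (fun k => hzx (φ k))
    (hlim.comp hφ.tendsto_atTop) hp.1 (fun k => hw (φ k)) (fun k => hwz (φ k)) hp.2, φ, hφ, hp⟩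

theorem eventually_exists_extPairs_norm_sub_le (hE : IsClosed E) (hε : 0 < ε) {δ : ℝ} (hδ : 0 < δ) :
    ∀ᶠ z in 𝓝[≠] x, z ∈ frontier (eNbhd E ε) → ∃ p ∈ extPairs E ε x, ∃ w ∈ E,
      ‖w - z‖ = ε ∧ 0 ≤ ⟪z - x, p.1⟫ ∧ ‖w - p.2‖ ≤ δ := by
  by_contra hcon
  obtain ⟨z, hzlim, hz⟩ := exists_seq_forall_of_frequently
    ((not_eventually.1 hcon).and_eventually eventually_mem_nhdsWithin)
  simp only [Classical.not_imp, not_exists, not_and, mem_compl_iff, mem_singleton_iff] at hz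
  choose w hw hwz using fun k => exists_norm_sub_eq_of_mem_frontier hE hε (hz k).1.1
  obtain ⟨p, hp, φ, -, hdir, hwlim⟩ := exists_subseq_tendsto_extPairs hE hε
    (fun k => (hz k).1.1) (fun k => (hz k).2) (tendsto_nhdsWithin_iff.1 hzlim).1 hw hwz
  have hinner : Tendsto (fun k => ⟪‖z (φ k) - x‖⁻¹ • (z (φ k) - x), p.1⟫) atTop (𝓝 1) := by
    simpa [hp.1.1] using hdir.inner (𝕜 := ℝ) (tendsto_const_nhds (x := p.1))
  have hdist : Tendsto (fun k => ‖w (φ k) - p.2‖) atTop (𝓝 0) :=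
    tendsto_iff_norm_sub_tendsto_zero.1 hwlim
  obtain ⟨k, hk_inner, hk_dist⟩ :=
    ((hinner.eventually_const_lt one_pos).and (hdist.eventually_le_const hδ)).exists
  refine (hz (φ k)).1.2 p hp (w (φ k)) (hw _) (hwz _) ?_ hk_dist
  rw [real_inner_smul_left] at hk_inner
  exact (pos_of_mul_pos_right hk_inner (by positivity)).le

theorem extPairs_nonempty (hE : IsClosed E) (hε : 0 < ε) (hx : x ∈ frontier (eNbhd E ε)) :
    (extPairs E ε x).Nonempty := by
  obtain ⟨z, hz, hfr⟩ := ((accPt_iff_frequently_nhdsNE.1 (accPt_frontier hE hε hx)).and_eventually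
    (eventually_exists_extPairs_norm_sub_le hE hε one_pos)).exists
  obtain ⟨p, hp, -⟩ := hfr hz
  exact ⟨p, hp⟩

end ExtremalPairs

section Directions

variable {E : Set Plane} {ε : ℝ} {x : Plane} {p : Plane × Plane}

theorem snd_mem_of_mem_extPairs (hE : IsClosed E) (hp : p ∈ extPairs E ε x) : p.2 ∈ E :=
  hE.frontier_subset hp.2.1.1

theorem norm_snd_sub_of_mem_extPairs (hp : p ∈ extPairs E ε x) : ‖p.2 - x‖ = ε :=
  hp.2.1.2

theorem orthonormal_rightAngleRotation (o : Orientation ℝ Plane (Fin 2)) {ξ : Plane}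
    (hξ : ‖ξ‖ = 1) : Orthonormal ℝ ![ξ, o.rightAngleRotation ξ] := by
  refine orthonormal_pair_iff.2 ⟨hξ, (o.rightAngleRotation.norm_map ξ).trans hξ, ?_⟩
  rw [real_inner_comm, o.inner_rightAngleRotation_self]

-- For two such pairs `p` and `q`, antisymmetry of the quarter turn gives the half-plane
-- inequalities `⟪p.2 - x, q.1⟫ ≤ 0` and `⟪q.2 - x, p.1⟫ ≤ 0` opposite left-hand sides.
theorem finite_extPairs_snd_sub_eq_smul (hE : IsClosed E) (hε : 0 < ε) (x : Plane)
    (o : Orientation ℝ Plane (Fin 2)) {σ : ℝ} (hσ : σ ≠ 0) :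
    {p ∈ extPairs E ε x | p.2 - x = σ • o.rightAngleRotation p.1}.Finite := by
  obtain hempty | ⟨q, hq, hqσ⟩ :=
    {p ∈ extPairs E ε x | p.2 - x = σ • o.rightAngleRotation p.1}.eq_empty_or_nonempty
  · exact hempty ▸ finite_empty
  refine ((toFinite {q.1, -q.1}).image fun ξ => (ξ, x + σ • o.rightAngleRotation ξ)).subset ?_
  rintro p ⟨hp, hpσ⟩
  refine ⟨p.1, ?_, Prod.ext rfl (add_eq_of_eq_sub' hpσ.symm)⟩
  have hpq := inner_nonpos_of_mem_outwardDirs hE hε hq.1 (snd_mem_of_mem_extPairs hE hp)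
    (norm_snd_sub_of_mem_extPairs hp).le
  have hqp := inner_nonpos_of_mem_outwardDirs hE hε hp.1 (snd_mem_of_mem_extPairs hE hq)
    (norm_snd_sub_of_mem_extPairs hq).le
  rw [hpσ, real_inner_smul_left, ← neg_neg ⟪_, _⟫, ← o.inner_rightAngleRotation_swap] at hpq
  rw [hqσ, real_inner_smul_left, real_inner_comm] at hqp
  have hzero : ⟪p.1, o.rightAngleRotation q.1⟫ = 0 := by
    refine (mul_eq_zero.1 (le_antisymm hqp ?_)).resolve_left hσ
    linarith
  exact eq_or_eq_neg_of_inner_eq_zero (orthonormal_rightAngleRotation o hq.1.1) hp.1.1 hzero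

theorem extPairs_finite (hE : IsClosed E) (hε : 0 < ε) (x : Plane) : (extPairs E ε x).Finite := by
  let o : Orientation ℝ Plane (Fin 2) := (EuclideanSpace.basisFun (Fin 2) ℝ).toBasis.orientation
  refine ((finite_extPairs_snd_sub_eq_smul hE hε x o hε.ne').union
    (finite_extPairs_snd_sub_eq_smul hE hε x o (neg_ne_zero.2 hε.ne'))).subset fun p hp => ?_
  rw [← sep_or]
  refine ⟨hp, ?_⟩
  have hnorm := norm_snd_sub_of_mem_extPairs hp
  have hframe := orthonormal_rightAngleRotation o hp.1.1
  have hcoord := inner_smul_add_inner_smul_eq hframe (p.2 - x)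
  have hsq := norm_sq_eq_inner_sq_add_inner_sq hframe (p.2 - x)
  rw [hp.2.2, zero_smul, zero_add] at hcoord
  rw [hp.2.2, hnorm, zero_pow two_ne_zero, zero_add, sq_eq_sq_iff_eq_or_eq_neg] at hsq
  rcases hsq with h | h
  · exact Or.inl (by rw [h, hcoord])
  · exact Or.inr (by rw [h, neg_neg, hcoord])

/-- The unit vector pointing from the extremal contributor `p.2` towards `x`. -/
def unitNormal (ε : ℝ) (x : Plane) (p : Plane × Plane) : Plane :=
  ε⁻¹ • (x - p.2)

theorem smul_unitNormal (hε : 0 < ε) (x : Plane) (p : Plane × Plane) :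
    ε • unitNormal ε x p = x - p.2 :=
  smul_inv_smul₀ hε.ne' _

theorem orthonormal_unitNormal (hε : 0 < ε) (hp : p ∈ extPairs E ε x) :
    Orthonormal ℝ ![p.1, unitNormal ε x p] := by
  refine orthonormal_pair_iff.2 ⟨hp.1.1, ?_, ?_⟩
  · rw [unitNormal, norm_smul_of_nonneg (inv_nonneg.2 hε.le), norm_sub_rev,
      norm_snd_sub_of_mem_extPairs hp, inv_mul_cancel₀ hε.ne']
  · rw [unitNormal, real_inner_smul_right, ← neg_sub p.2, inner_neg_right, real_inner_comm,
      hp.2.2, neg_zero, mul_zero]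

theorem eq_or_eq_neg_of_antipode_mem (hE : IsClosed E) (hε : 0 < ε) (hp : p ∈ extPairs E ε x)
    (hanti : x + (x - p.2) ∈ E) {ζ : Plane} (hζ : ζ ∈ outwardDirs E ε x) :
    ζ = p.1 ∨ ζ = -p.1 := by
  have hpx := norm_snd_sub_of_mem_extPairs hp
  have hle := inner_nonpos_of_mem_outwardDirs hE hε hζ (snd_mem_of_mem_extPairs hE hp) hpx.le
  have hle_anti := inner_nonpos_of_mem_outwardDirs hE hε hζ hanti
    (by rw [add_sub_cancel_left, norm_sub_rev, hpx])
  rw [add_sub_cancel_left, ← neg_sub, inner_neg_left, Left.neg_nonpos_iff] at hle_anti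
  refine eq_or_eq_neg_of_inner_eq_zero (orthonormal_unitNormal hε hp) hζ.1 ?_
  rw [unitNormal, real_inner_smul_right, ← neg_sub p.2, inner_neg_right, real_inner_comm,
    hle.antisymm hle_anti, neg_zero, mul_zero]

theorem antipode_notMem (hE : IsClosed E) (hε : 0 < ε) (hp : p ∈ extPairs E ε x)
    (h : IsWedge E ε x ∨ x ∈ unp E ε) : x + (x - p.2) ∉ E := by
  intro hanti
  rcases h with ⟨-, ξ₁, ξ₂, hext, hne, hne_neg⟩ | ⟨-, y, hy⟩
  · have hmem (ζ : Plane) (hζ : ζ ∈ ({ξ₁, ξ₂} : Set Plane)) : ζ = p.1 ∨ ζ = -p.1 :=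
      eq_or_eq_neg_of_antipode_mem hE hε hp hanti (hext ▸ hζ : ζ ∈ extOutward E ε x).1
    rcases hmem ξ₁ (Or.inl rfl) with h₁ | h₁ <;>
      rcases hmem ξ₂ (Or.inr rfl) with h₂ | h₂ <;> simp [h₁, h₂] at hne hne_neg
  · have hpx := norm_snd_sub_of_mem_extPairs hp
    have hx := mem_frontier_of_mem_extPairs hE hε hp
    have hanti_mem : x + (x - p.2) ∈ contributors E ε x :=
      (mem_contributors_iff hE hε hx).2 ⟨hanti, by rw [add_sub_cancel_left, norm_sub_rev, hpx]⟩
    have heq : x + (x - p.2) = p.2 := by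
      rw [hy] at hanti_mem
      exact hanti_mem.trans (hy ▸ hp.2.1 : p.2 ∈ ({y} : Set Plane)).symm
    have htwo : (2 : ℝ) • (x - p.2) = 0 := by
      rw [two_smul, ← sub_eq_zero.2 heq]
      abel
    have hzero : x - p.2 = 0 := (smul_eq_zero.1 htwo).resolve_left two_ne_zero
    rw [norm_sub_rev, hzero, norm_zero] at hpx
    exact hε.ne hpx

end Directions

section Curve

/-- Over the tangent line at `x` spanned by `p.1`, the height of the boundary branch of the
extremal pair `p`, read off from the points of `E` within `ε / 4` of the contributor `p.2`. -/
def boundaryHeight (E : Set Plane) (ε : ℝ) (x : Plane) (p : Plane × Plane) (s : ℝ) : ℝ :=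
  upperEnvelope ε (E ∩ closedBall p.2 (ε / 4)) x p.1 (unitNormal ε x p) s

/-- The boundary branch of the extremal pair `p`, denoted `g_{ξ,y}` in the paper with
`f_{ξ,y} = ε⁻¹ * boundaryHeight`. -/
def boundaryCurve (E : Set Plane) (ε : ℝ) (x : Plane) (p : Plane × Plane) (s : ℝ) : Plane :=
  x + s • p.1 + (ε⁻¹ * boundaryHeight E ε x p s) • (x - p.2)

/-- The parameters in `[0, ε / 2]` at which the branch of `p` runs on `∂E_ε` within distance `r`
of `x`, denoted `A_{ξ,y}` in the paper. -/
def boundaryParams (E : Set Plane) (ε : ℝ) (x : Plane) (p : Plane × Plane) (r : ℝ) : Set ℝ :=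
  {s ∈ Icc 0 (ε / 2) | boundaryCurve E ε x p s ∈ frontier (eNbhd E ε) ∩ closedBall x r}

variable {E : Set Plane} {ε : ℝ} {x : Plane} {p : Plane × Plane} {s t : ℝ}

theorem boundaryCurve_eq (hε : 0 < ε) (s : ℝ) : boundaryCurve E ε x p s =
    x + s • p.1 + boundaryHeight E ε x p s • unitNormal ε x p := by
  rw [boundaryCurve, ← smul_unitNormal hε x p, smul_smul, mul_right_comm,
    inv_mul_cancel₀ hε.ne', one_mul]

theorem continuous_boundaryHeight (hE : IsClosed E) : Continuous (boundaryHeight E ε x p) :=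
  continuous_upperEnvelope ((isCompact_closedBall _ _).inter_left hE)

theorem continuous_boundaryCurve (hE : IsClosed E) : Continuous (boundaryCurve E ε x p) := by
  have := continuous_boundaryHeight (ε := ε) (x := x) (p := p) hE
  unfold boundaryCurve
  fun_prop

theorem isClosed_boundaryParams (hE : IsClosed E) (r : ℝ) :
    IsClosed (boundaryParams E ε x p r) :=
  isClosed_Icc.inter
    ((isClosed_frontier.inter isClosed_closedBall).preimage (continuous_boundaryCurve hE))

theorem inner_snd_sub_unitNormal (hε : 0 < ε) (hp : p ∈ extPairs E ε x) :
    ⟪p.2 - x, unitNormal ε x p⟫ = -ε := by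
  rw [unitNormal, real_inner_smul_right, ← neg_sub p.2, inner_neg_right,
    real_inner_self_eq_norm_sq, norm_snd_sub_of_mem_extPairs hp]
  field_simp

theorem abs_inner_sub_le_of_mem_closedBall (hp : p ∈ extPairs E ε x) {e : Plane}
    (he : e ∈ closedBall p.2 (ε / 4)) : |⟪e - x, p.1⟫| ≤ ε / 4 := by
  rw [← sub_add_sub_cancel e p.2, inner_add_left, hp.2.2, add_zero]
  exact (abs_inner_le_norm_of_norm_eq_one hp.1.1 _).trans (mem_closedBall_iff_norm.1 he)

theorem inner_sub_unitNormal_le_of_mem_closedBall (hε : 0 < ε) (hp : p ∈ extPairs E ε x)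
    {e : Plane} (he : e ∈ closedBall p.2 (ε / 4)) :
    ⟪e - x, unitNormal ε x p⟫ ≤ -(3 * ε / 4) := by
  have hn := (orthonormal_pair_iff.1 (orthonormal_unitNormal hε hp)).2.1
  rw [← sub_add_sub_cancel e p.2, inner_add_left, inner_snd_sub_unitNormal hε hp]
  linarith [le_of_abs_le (abs_inner_le_norm_of_norm_eq_one hn (e - p.2)),
    mem_closedBall_iff_norm.1 he]

theorem inter_closedBall_nonempty (hE : IsClosed E) (hε : 0 < ε) (hp : p ∈ extPairs E ε x) :
    (E ∩ closedBall p.2 (ε / 4)).Nonempty :=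
  ⟨p.2, snd_mem_of_mem_extPairs hE hp, mem_closedBall_self (by positivity)⟩

theorem le_boundaryHeight_iff (hE : IsClosed E) (hε : 0 < ε) (hp : p ∈ extPairs E ε x)
    (ht : -(3 * ε / 4) < t) : t ≤ boundaryHeight E ε x p s ↔
      ∃ e ∈ E ∩ closedBall p.2 (ε / 4), ‖e - (x + s • p.1 + t • unitNormal ε x p)‖ ≤ ε :=
  le_upperEnvelope_iff hε.le (orthonormal_unitNormal hε hp)
    ((isCompact_closedBall _ _).inter_left hE) (inter_closedBall_nonempty hE hε hp)
    fun _ he => (inner_sub_unitNormal_le_of_mem_closedBall hε hp he.2).trans_lt ht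

theorem lt_boundaryHeight_iff (hE : IsClosed E) (hε : 0 < ε) (hp : p ∈ extPairs E ε x)
    (ht : -(3 * ε / 4) < t) : t < boundaryHeight E ε x p s ↔
      ∃ e ∈ E ∩ closedBall p.2 (ε / 4), ‖e - (x + s • p.1 + t • unitNormal ε x p)‖ < ε :=
  lt_upperEnvelope_iff hε.le (orthonormal_unitNormal hε hp)
    ((isCompact_closedBall _ _).inter_left hE) (inter_closedBall_nonempty hE hε hp)
    fun _ he => (inner_sub_unitNormal_le_of_mem_closedBall hε hp he.2).trans_lt ht

theorem lipschitzOnWith_boundaryHeight (hE : IsClosed E) (hε : 0 < ε)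
    (hp : p ∈ extPairs E ε x) :
    LipschitzOnWith (Real.toNNReal (1 / √3)) (boundaryHeight E ε x p) (Icc 0 (ε / 4)) :=
  lipschitzOnWith_upperEnvelope hε ((isCompact_closedBall _ _).inter_left hE)
    (inter_closedBall_nonempty hE hε hp) fun e he s hs => by
      have := abs_le.1 (abs_inner_sub_le_of_mem_closedBall hp he.2)
      exact abs_le.2 ⟨by linarith [hs.1], by linarith [hs.2]⟩

theorem boundaryHeight_zero (hE : IsClosed E) (hε : 0 < ε) (hp : p ∈ extPairs E ε x) :
    boundaryHeight E ε x p 0 = 0 := by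
  have hx := mem_frontier_of_mem_extPairs hE hε hp
  have hneg : -(3 * ε / 4) < 0 := by linarith
  refine le_antisymm (not_lt.1 fun hlt => ?_) ((le_boundaryHeight_iff hE hε hp hneg).2
    ⟨p.2, ⟨snd_mem_of_mem_extPairs hE hp, mem_closedBall_self (by positivity)⟩,
      by simpa using (norm_snd_sub_of_mem_extPairs hp).le⟩)
  obtain ⟨e, he, hlt⟩ := (lt_boundaryHeight_iff hE hε hp hneg).1 hlt
  rw [zero_smul, zero_smul, add_zero, add_zero] at hlt
  exact hlt.not_ge (le_norm_sub_of_mem_frontier hx he.1)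

theorem abs_boundaryHeight_sub_le (hE : IsClosed E) (hε : 0 < ε) (hp : p ∈ extPairs E ε x)
    (hs : s ∈ Icc 0 (ε / 4)) (ht : t ∈ Icc 0 (ε / 4)) :
    |boundaryHeight E ε x p s - boundaryHeight E ε x p t| ≤ 1 / √3 * |s - t| := by
  simpa only [Real.dist_eq, Real.coe_toNNReal (1 / √3) (by positivity)] using
    (lipschitzOnWith_boundaryHeight hE hε hp).dist_le_mul s hs t ht

theorem abs_boundaryHeight_le (hE : IsClosed E) (hε : 0 < ε) (hp : p ∈ extPairs E ε x)
    (hs : s ∈ Icc 0 (ε / 4)) : |boundaryHeight E ε x p s| ≤ s := by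
  have hle := abs_boundaryHeight_sub_le hE hε hp hs (left_mem_Icc.2 (by positivity))
  rw [boundaryHeight_zero hE hε hp, sub_zero, sub_zero, abs_of_nonneg hs.1] at hle
  have hone : 1 / √3 ≤ 1 := (div_le_one (by positivity)).2 (Real.one_le_sqrt.2 (by norm_num))
  exact hle.trans (mul_le_of_le_one_left hs.1 hone)

theorem neg_lt_boundaryHeight (hE : IsClosed E) (hε : 0 < ε) (hp : p ∈ extPairs E ε x)
    (hs : s ∈ Icc 0 (ε / 4)) : -(3 * ε / 4) < boundaryHeight E ε x p s := by
  linarith [(abs_le.1 (abs_boundaryHeight_le hE hε hp hs)).1, hs.2]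

theorem boundaryCurve_zero (hE : IsClosed E) (hε : 0 < ε) (hp : p ∈ extPairs E ε x) :
    boundaryCurve E ε x p 0 = x := by
  rw [boundaryCurve, boundaryHeight_zero hE hε hp, mul_zero, zero_smul, zero_smul, add_zero,
    add_zero]

theorem boundaryCurve_sub (hε : 0 < ε) (s : ℝ) : boundaryCurve E ε x p s - x =
    s • p.1 + boundaryHeight E ε x p s • unitNormal ε x p := by
  rw [boundaryCurve_eq hε, add_assoc, add_sub_cancel_left]

theorem norm_boundaryCurve_sub_sq (hε : 0 < ε) (hp : p ∈ extPairs E ε x) (s : ℝ) :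
    ‖boundaryCurve E ε x p s - x‖ ^ 2 = s ^ 2 + boundaryHeight E ε x p s ^ 2 := by
  rw [boundaryCurve_sub hε, norm_smul_add_smul_sq (orthonormal_unitNormal hε hp)]

theorem le_norm_boundaryCurve_sub (hε : 0 < ε) (hp : p ∈ extPairs E ε x) (s : ℝ) :
    s ≤ ‖boundaryCurve E ε x p s - x‖ := by
  refine le_of_abs_le (abs_le_of_sq_le_sq ?_ (norm_nonneg _))
  rw [norm_boundaryCurve_sub_sq hε hp]
  exact le_add_of_nonneg_right (sq_nonneg _)

theorem strictMonoOn_norm_boundaryCurve_sub (hE : IsClosed E) (hε : 0 < ε)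
    (hp : p ∈ extPairs E ε x) :
    StrictMonoOn (fun s => ‖boundaryCurve E ε x p s - x‖) (Icc 0 (ε / 4)) := by
  intro s hs t ht hst
  refine lt_of_pow_lt_pow_left₀ 2 (norm_nonneg _) ?_
  rw [norm_boundaryCurve_sub_sq hε hp, norm_boundaryCurve_sub_sq hε hp]
  have hdiff := abs_boundaryHeight_sub_le hE hε hp hs ht
  have hone : 1 / √3 < 1 := (div_lt_one (by positivity)).2 (Real.lt_sqrt_of_sq_lt (by norm_num))
  have hpos : 0 < s + t := add_pos_of_nonneg_of_pos hs.1 (hs.1.trans_lt hst)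
  rw [abs_sub_comm s, abs_of_pos (sub_pos.2 hst)] at hdiff
  have hprod : |boundaryHeight E ε x p s - boundaryHeight E ε x p t| *
      |boundaryHeight E ε x p s + boundaryHeight E ε x p t| < (t - s) * (s + t) :=
    calc |boundaryHeight E ε x p s - boundaryHeight E ε x p t| *
          |boundaryHeight E ε x p s + boundaryHeight E ε x p t|
        ≤ |boundaryHeight E ε x p s - boundaryHeight E ε x p t| * (s + t) := by
          gcongr
          exact (abs_add_le _ _).trans (add_le_add (abs_boundaryHeight_le hE hε hp hs)
            (abs_boundaryHeight_le hE hε hp ht))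
      _ < (t - s) * (s + t) := by
          gcongr
          exact hdiff.trans_lt (mul_lt_of_lt_one_left (sub_pos.2 hst) hone)
  rw [← abs_mul] at hprod
  linarith [(le_abs_self _).trans_lt hprod]

theorem lipschitzOnWith_boundaryCurve (hE : IsClosed E) (hε : 0 < ε) (hp : p ∈ extPairs E ε x) :
    LipschitzOnWith (Real.toNNReal (2 / √3)) (boundaryCurve E ε x p) (Icc 0 (ε / 4)) := by
  refine LipschitzOnWith.of_dist_le_mul fun s hs t ht => ?_
  rw [Real.coe_toNNReal _ (by positivity), dist_eq_norm, Real.dist_eq]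
  refine le_of_sq_le_sq ?_ (by positivity)
  calc ‖boundaryCurve E ε x p s - boundaryCurve E ε x p t‖ ^ 2
      = ‖(s - t) • p.1 +
          (boundaryHeight E ε x p s - boundaryHeight E ε x p t) • unitNormal ε x p‖ ^ 2 := by
        rw [← sub_sub_sub_cancel_right _ _ x, boundaryCurve_sub hε, boundaryCurve_sub hε]
        congr 2
        module
    _ = |s - t| ^ 2 + |boundaryHeight E ε x p s - boundaryHeight E ε x p t| ^ 2 := by
        rw [norm_smul_add_smul_sq (orthonormal_unitNormal hε hp), sq_abs, sq_abs]
    _ ≤ |s - t| ^ 2 + (1 / √3 * |s - t|) ^ 2 := by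
        gcongr
        exact abs_boundaryHeight_sub_le hE hε hp hs ht
    _ = (2 / √3 * |s - t|) ^ 2 := by
        rw [mul_pow, mul_pow, div_pow, div_pow, Real.sq_sqrt (by norm_num)]
        ring

theorem lipschitzOnWith_inv_mul_boundaryHeight (hE : IsClosed E) (hε : 0 < ε)
    (hp : p ∈ extPairs E ε x) :
    LipschitzOnWith (Real.toNNReal (1 / (√3 * ε))) (fun s => ε⁻¹ * boundaryHeight E ε x p s)
      (Icc 0 (ε / 4)) := by
  refine LipschitzOnWith.of_dist_le_mul fun s hs t ht => ?_
  rw [Real.coe_toNNReal _ (by positivity), Real.dist_eq, Real.dist_eq, ← mul_sub, abs_mul,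
    abs_of_pos (inv_pos.2 hε)]
  calc ε⁻¹ * |boundaryHeight E ε x p s - boundaryHeight E ε x p t|
      ≤ ε⁻¹ * (1 / √3 * |s - t|) := by
        gcongr
        exact abs_boundaryHeight_sub_le hE hε hp hs ht
    _ = 1 / (√3 * ε) * |s - t| := by field_simp

theorem eq_boundaryCurve_of_mem_frontier (hE : IsClosed E) (hε : 0 < ε)
    (hp : p ∈ extPairs E ε x) {z w : Plane} (hz : z ∈ frontier (eNbhd E ε))
    (hzx : ‖z - x‖ < 3 * ε / 4) (hw : w ∈ E ∩ closedBall p.2 (ε / 4)) (hwz : ‖w - z‖ ≤ ε) :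
    boundaryCurve E ε x p ⟪z - x, p.1⟫ = z := by
  have hframe := orthonormal_unitNormal hε hp
  have hcoord : x + ⟪z - x, p.1⟫ • p.1 + ⟪z - x, unitNormal ε x p⟫ • unitNormal ε x p = z := by
    rw [add_assoc, inner_smul_add_inner_smul_eq hframe, add_sub_cancel]
  have hheight : -(3 * ε / 4) < ⟪z - x, unitNormal ε x p⟫ := by
    have hle := abs_inner_le_norm_of_norm_eq_one (orthonormal_pair_iff.1 hframe).2.1 (z - x)
    linarith [neg_le_of_abs_le hle]
  have heq : boundaryHeight E ε x p ⟪z - x, p.1⟫ = ⟪z - x, unitNormal ε x p⟫ := by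
    refine le_antisymm (not_lt.1 fun hlt => ?_)
      ((le_boundaryHeight_iff hE hε hp hheight).2 ⟨w, hw, by rwa [hcoord]⟩)
    obtain ⟨e, he, hez⟩ := (lt_boundaryHeight_iff hE hε hp hheight).1 hlt
    rw [hcoord] at hez
    exact hez.not_ge (le_norm_sub_of_mem_frontier hz he.1)
  rw [boundaryCurve_eq hε, heq, hcoord]

theorem exists_norm_sub_boundaryCurve_le (hE : IsClosed E) (hε : 0 < ε)
    (hp : p ∈ extPairs E ε x) (hs : s ∈ Icc 0 (ε / 4)) :
    ∃ e ∈ E ∩ closedBall p.2 (ε / 4), ‖e - boundaryCurve E ε x p s‖ ≤ ε := by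
  rw [boundaryCurve_eq hε]
  exact (le_boundaryHeight_iff hE hε hp (neg_lt_boundaryHeight hE hε hp hs)).1 le_rfl

theorem tendsto_boundaryCurve (hE : IsClosed E) (hε : 0 < ε) (hp : p ∈ extPairs E ε x) :
    Tendsto (boundaryCurve E ε x p) (𝓝[>] 0) (𝓝 x) := by
  have hcont := (continuous_boundaryCurve (ε := ε) (x := x) (p := p) hE).tendsto 0
  rw [boundaryCurve_zero hE hε hp] at hcont
  exact hcont.mono_left nhdsWithin_le_nhds

theorem eventually_boundaryHeight_le (hE : IsClosed E) (hε : 0 < ε) (hp : p ∈ extPairs E ε x)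
    {η : ℝ} (hη : 0 < η) : ∀ᶠ s in 𝓝[>] 0, boundaryHeight E ε x p s ≤ η * s := by
  have hx := mem_frontier_of_mem_extPairs hE hε hp
  have hnear : ∀ᶠ z in 𝓝 x, ∀ e ∈ E, ‖e - z‖ ≤ ε → ⟪e - x, p.1⟫ < 3 * ε / 4 * η :=
    eventually_forall_mem_of_norm_sub_le hE hε
      (isOpen_lt (by fun_prop) continuous_const : IsOpen {e | ⟪e - x, p.1⟫ < 3 * ε / 4 * η})
      fun e he hex => (inner_nonpos_of_mem_outwardDirs hE hε hp.1 he hex).trans_lt (by positivity)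
  filter_upwards [(tendsto_boundaryCurve hE hε hp).eventually hnear,
    Ioc_mem_nhdsGT (by positivity : 0 < ε / 4)] with s hs hsε
  obtain ⟨e, he, hes⟩ := exists_norm_sub_boundaryCurve_le hE hε hp ⟨hsε.1.le, hsε.2⟩
  have hinner := (norm_sub_le_norm_sub_iff_sq_le_inner e x (boundaryCurve E ε x p s)).1
    (hes.trans (le_norm_sub_of_mem_frontier hx he.1))
  rw [boundaryCurve_sub hε, inner_add_right, real_inner_smul_right, real_inner_smul_right]
    at hinner
  have hfst := hs e he.1 hes
  have hsnd := inner_sub_unitNormal_le_of_mem_closedBall hε hp he.2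
  by_contra! hlt
  have hpos : 0 < boundaryHeight E ε x p s := (mul_pos hη hsε.1).trans hlt
  have hneg : s * ⟪e - x, p.1⟫ + boundaryHeight E ε x p s * ⟪e - x, unitNormal ε x p⟫ < 0 :=
    calc s * ⟪e - x, p.1⟫ + boundaryHeight E ε x p s * ⟪e - x, unitNormal ε x p⟫
        ≤ s * (3 * ε / 4 * η) + boundaryHeight E ε x p s * -(3 * ε / 4) := by
          gcongr
          exact hsε.1.le
      _ = 3 * ε / 4 * (η * s - boundaryHeight E ε x p s) := by ring
      _ < 0 := mul_neg_of_pos_of_neg (by positivity) (sub_neg.2 hlt)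
  linarith [sq_nonneg ‖s • p.1 + boundaryHeight E ε x p s • unitNormal ε x p‖]

theorem eventually_neg_le_boundaryHeight (hE : IsClosed E) (hε : 0 < ε)
    (hp : p ∈ extPairs E ε x) {η : ℝ} (hη : 0 < η) :
    ∀ᶠ s in 𝓝[>] 0, -(η * s) ≤ boundaryHeight E ε x p s := by
  have hsmall (c : ℝ) {δ : ℝ} (hδ : 0 < δ) : ∀ᶠ s in 𝓝[>] 0, c * s < δ :=
    (((continuous_const_mul c).tendsto' 0 0 (mul_zero c)).eventually_lt_const hδ).filter_mono
      nhdsWithin_le_nhds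
  filter_upwards [hsmall η (by positivity : 0 < 3 * ε / 4),
    hsmall (1 + η ^ 2) (by positivity : 0 < 2 * ε * η), self_mem_nhdsWithin] with s hsη hsε hs
  refine (le_boundaryHeight_iff hE hε hp (neg_lt_neg hsη)).2 ⟨p.2,
    ⟨snd_mem_of_mem_extPairs hE hp, mem_closedBall_self (by positivity)⟩, ?_⟩
  refine le_of_sq_le_sq ?_ hε.le
  rw [norm_sub_add_smul_add_smul_sq (orthonormal_unitNormal hε hp), hp.2.2,
    inner_snd_sub_unitNormal hε hp]
  nlinarith [mul_le_mul_of_nonneg_left hsε.le (le_of_lt hs)]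

theorem isLittleO_boundaryHeight (hE : IsClosed E) (hε : 0 < ε) (hp : p ∈ extPairs E ε x) :
    boundaryHeight E ε x p =o[𝓝[>] 0] fun s => s := by
  refine Asymptotics.isLittleO_iff.2 fun η hη => ?_
  filter_upwards [eventually_boundaryHeight_le hE hε hp hη,
    eventually_neg_le_boundaryHeight hE hε hp hη, self_mem_nhdsWithin] with s hs_le hs_ge hs
  rw [Real.norm_eq_abs, Real.norm_eq_abs, abs_of_pos (a := s) hs]
  exact abs_le.2 ⟨hs_ge, hs_le⟩

end Curve

section Cone

variable {E : Set Plane} {ε : ℝ} {x : Plane} {p : Plane × Plane} {s : ℝ}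

theorem inner_neg_of_norm_sub_le (hE : IsClosed E) (hε : 0 < ε) (hp : p ∈ extPairs E ε x)
    (hanti : x + (x - p.2) ∉ E) {e : Plane} (he : e ∈ E) (hex : ‖e - x‖ ≤ ε) (hne : e ≠ p.2) :
    ⟪e - x, p.1⟫ < 0 := by
  refine (inner_nonpos_of_mem_outwardDirs hE hε hp.1 he hex).lt_of_ne fun hzero => ?_
  have hframe := orthonormal_unitNormal hε hp
  have hnorm : ‖e - x‖ = ε :=
    hex.antisymm (le_norm_sub_of_mem_frontier (mem_frontier_of_mem_extPairs hE hε hp) he)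
  have hcoord := inner_smul_add_inner_smul_eq hframe (e - x)
  have hsq := norm_sq_eq_inner_sq_add_inner_sq hframe (e - x)
  rw [hzero, zero_smul, zero_add] at hcoord
  rw [hnorm, hzero, zero_pow two_ne_zero, zero_add, sq_eq_sq_iff_eq_or_eq_neg] at hsq
  rcases hsq with h | h
  · rw [← h, smul_unitNormal hε] at hcoord
    exact hanti (by rwa [hcoord, add_sub_cancel])
  · rw [← neg_eq_iff_eq_neg.2 h, neg_smul, smul_unitNormal hε, neg_sub] at hcoord
    exact hne (sub_left_inj.1 hcoord.symm)

theorem exists_eventually_inner_lt_neg (hE : IsClosed E) (hε : 0 < ε) (hp : p ∈ extPairs E ε x)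
    (hanti : x + (x - p.2) ∉ E) : ∃ η > 0, ∀ᶠ z in 𝓝 x, ∀ e ∈ E, ‖e - z‖ ≤ ε →
      e ∉ closedBall p.2 (ε / 4) → ⟪e - x, p.1⟫ < -η := by
  have hD : IsClosed (E \ ball p.2 (ε / 4)) := hE.sdiff isOpen_ball
  have hneg : ∀ e ∈ closedBall x ε ∩ (E \ ball p.2 (ε / 4)), 0 < -⟪e - x, p.1⟫ := by
    rintro e ⟨hex, he, hball⟩
    refine neg_pos.2 (inner_neg_of_norm_sub_le hE hε hp hanti he (mem_closedBall_iff_norm.1 hex) ?_)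
    rintro rfl
    exact hball (mem_ball_self (by positivity))
  obtain ⟨η, hη, hle⟩ := ((isCompact_closedBall x ε).inter_right hD).exists_forall_le'
    (by fun_prop : Continuous fun e => -⟪e - x, p.1⟫).continuousOn hneg
  have hnear : ∀ᶠ z in 𝓝 x, ∀ e ∈ E \ ball p.2 (ε / 4), ‖e - z‖ ≤ ε → ⟪e - x, p.1⟫ < -(η / 2) :=
    eventually_forall_mem_of_norm_sub_le hD hε
      (isOpen_lt (by fun_prop) continuous_const : IsOpen {e | ⟪e - x, p.1⟫ < -(η / 2)})
      fun e he hex => show ⟪e - x, p.1⟫ < -(η / 2) by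
        linarith [hle e ⟨mem_closedBall_iff_norm.2 hex, he⟩]
  refine ⟨η / 2, half_pos hη, hnear.mono fun z hz e he hez hball => ?_⟩
  exact hz e ⟨he, fun h => hball (ball_subset_closedBall h)⟩ hez

theorem exists_eventually_forall_mem_closedBall (hE : IsClosed E) (hε : 0 < ε)
    (hp : p ∈ extPairs E ε x) (hanti : x + (x - p.2) ∉ E) :
    ∃ κ > 0, ∀ᶠ z in 𝓝 x, 0 < ⟪z - x, p.1⟫ →
      |⟪z - x, unitNormal ε x p⟫| ≤ κ * ⟪z - x, p.1⟫ →
        ∀ e ∈ E, ‖e - z‖ ≤ ε → e ∈ closedBall p.2 (ε / 4) := by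
  have hframe := orthonormal_unitNormal hε hp
  have hx := mem_frontier_of_mem_extPairs hE hε hp
  obtain ⟨η, hη, hnear⟩ := exists_eventually_inner_lt_neg hE hε hp hanti
  refine ⟨η / (2 * ε), by positivity, ?_⟩
  filter_upwards [hnear, closedBall_mem_nhds x hε] with z hz hzx hpos hcone e he hez
  -- `e - x` points away from `ξ` by a definite amount, so moving from `x` into the cone cannot
  -- bring us closer to `e`, which was at distance at least `ε`.
  by_contra hball
  have hinner := (norm_sub_le_norm_sub_iff_sq_le_inner e x z).1
    (hez.trans (le_norm_sub_of_mem_frontier hx he))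
  rw [← inner_smul_add_inner_smul_eq hframe (z - x), inner_add_right, real_inner_smul_right,
    real_inner_smul_right] at hinner
  have hfst := mul_lt_mul_of_pos_left (hz e he hez hball) hpos
  have hex : |⟪e - x, unitNormal ε x p⟫| ≤ 2 * ε := by
    have hle := abs_inner_le_norm_of_norm_eq_one (orthonormal_pair_iff.1 hframe).2.1 (e - x)
    linarith [norm_sub_le_norm_sub_add_norm_sub e z x, mem_closedBall_iff_norm.1 hzx]
  have hsnd : ⟪z - x, unitNormal ε x p⟫ * ⟪e - x, unitNormal ε x p⟫ ≤ η * ⟪z - x, p.1⟫ :=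
    calc ⟪z - x, unitNormal ε x p⟫ * ⟪e - x, unitNormal ε x p⟫
        ≤ |⟪z - x, unitNormal ε x p⟫| * |⟪e - x, unitNormal ε x p⟫| :=
          (le_abs_self _).trans (abs_mul _ _).le
      _ ≤ η / (2 * ε) * ⟪z - x, p.1⟫ * (2 * ε) := by gcongr
      _ = η * ⟪z - x, p.1⟫ := by field_simp
  linarith [sq_nonneg ‖⟪z - x, p.1⟫ • p.1 + ⟪z - x, unitNormal ε x p⟫ • unitNormal ε x p‖]

theorem boundaryCurve_mem_frontier (hE : IsClosed E) (hε : 0 < ε) (hp : p ∈ extPairs E ε x)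
    (hs : s ∈ Icc 0 (ε / 4))
    (h : ∀ᶠ t in 𝓝[>] boundaryHeight E ε x p s, ∀ e ∈ E,
      ‖e - (x + s • p.1 + t • unitNormal ε x p)‖ ≤ ε → e ∈ closedBall p.2 (ε / 4)) :
    boundaryCurve E ε x p s ∈ frontier (eNbhd E ε) := by
  obtain ⟨e, he, hle⟩ := exists_norm_sub_boundaryCurve_le hE hε hp hs
  refine ⟨subset_closure ((mem_eNbhd_iff hE hε).2 ⟨e, he.1, hle⟩), ?_⟩
  rw [← mem_compl_iff, ← closure_compl, boundaryCurve_eq hε]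
  have hvert : Continuous fun t : ℝ => x + s • p.1 + t • unitNormal ε x p := by fun_prop
  refine mem_closure_of_tendsto (b := 𝓝[>] boundaryHeight E ε x p s)
    ((hvert.tendsto _).mono_left nhdsWithin_le_nhds) ?_
  filter_upwards [h, self_mem_nhdsWithin] with t ht hlt hmem
  obtain ⟨w, hw, hwt⟩ := (mem_eNbhd_iff hE hε).1 hmem
  exact (mem_Ioi.1 hlt).not_ge ((le_boundaryHeight_iff hE hε hp
    ((neg_lt_boundaryHeight hE hε hp hs).trans hlt)).2 ⟨w, ⟨hw, ht w hw hwt⟩, hwt⟩)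

theorem eventually_boundaryCurve_mem_frontier (hE : IsClosed E) (hε : 0 < ε)
    (hp : p ∈ extPairs E ε x) (hanti : x + (x - p.2) ∉ E) :
    ∀ᶠ s in 𝓝[>] 0, boundaryCurve E ε x p s ∈ frontier (eNbhd E ε) := by
  have hframe := orthonormal_unitNormal hε hp
  obtain ⟨κ, hκ, hcone⟩ := exists_eventually_forall_mem_closedBall hE hε hp hanti
  filter_upwards [(tendsto_boundaryCurve hE hε hp).eventually hcone.eventually_nhds,
    (isLittleO_boundaryHeight hE hε hp).bound (half_pos hκ), self_mem_nhdsWithin,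
    Ioc_mem_nhdsGT (by positivity : 0 < ε / 4)] with s hs hheight hpos hsε
  refine boundaryCurve_mem_frontier hE hε hp ⟨hsε.1.le, hsε.2⟩ ?_
  rw [Real.norm_eq_abs, Real.norm_of_nonneg hsε.1.le] at hheight
  have hlt : |boundaryHeight E ε x p s| < κ * s :=
    hheight.trans_lt (mul_lt_mul_of_pos_right (half_lt_self hκ) hpos)
  have hvert : Continuous fun t : ℝ => x + s • p.1 + t • unitNormal ε x p := by fun_prop
  rw [boundaryCurve_eq hε] at hs
  have habs : ∀ᶠ t in 𝓝 (boundaryHeight E ε x p s), |t| < κ * s :=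
    continuous_abs.continuousAt.eventually_lt_const hlt
  filter_upwards [nhdsWithin_le_nhds ((hvert.tendsto _).eventually hs),
    nhdsWithin_le_nhds habs] with t ht htκ
  rw [add_assoc, add_sub_cancel_left, inner_smul_add_smul_fst hframe,
    inner_smul_add_smul_snd hframe, ← add_assoc] at ht
  exact ht hpos htκ.le

end Cone

section Params

variable {E : Set Plane} {ε : ℝ} {x : Plane} {p : Plane × Plane} {r : ℝ}

theorem boundaryParams_eq_Icc (hE : IsClosed E) (hε : 0 < ε) (hp : p ∈ extPairs E ε x)
    (hr : r ∈ Ioc 0 (ε / 4))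
    (h : ∀ s ∈ Ioc 0 r, boundaryCurve E ε x p s ∈ frontier (eNbhd E ε)) :
    ∃ s, 0 < s ∧ s ≤ ε / 2 ∧ boundaryParams E ε x p r = Icc 0 s := by
  have hmono := strictMonoOn_norm_boundaryCurve_sub hE hε hp
  have hcont : Continuous fun s => ‖boundaryCurve E ε x p s - x‖ :=
    ((continuous_boundaryCurve hE).sub continuous_const).norm
  have hzero : ‖boundaryCurve E ε x p 0 - x‖ = 0 := by
    rw [boundaryCurve_zero hE hε hp, sub_self, norm_zero]
  obtain ⟨s₀, hs₀, hs₀r⟩ : r ∈ (fun s => ‖boundaryCurve E ε x p s - x‖) '' Icc 0 r :=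
    intermediate_value_Icc hr.1.le hcont.continuousOn
      ⟨hzero.trans_le hr.1.le, le_norm_boundaryCurve_sub hε hp r⟩
  have hs₀_mem : s₀ ∈ Icc 0 (ε / 4) := ⟨hs₀.1, hs₀.2.trans hr.2⟩
  have hs₀_ne : s₀ ≠ 0 := fun h0 => hr.1.ne' (hs₀r.symm.trans (by rwa [h0]))
  refine ⟨s₀, hs₀.1.lt_of_ne' hs₀_ne, by linarith [hs₀_mem.2], Subset.antisymm ?_ ?_⟩
  · rintro s ⟨hs, -, hsr⟩
    rw [mem_closedBall_iff_norm] at hsr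
    have hs_mem : s ∈ Icc 0 (ε / 4) :=
      ⟨hs.1, ((le_norm_boundaryCurve_sub hε hp s).trans hsr).trans hr.2⟩
    exact ⟨hs.1, (hmono.le_iff_le hs_mem hs₀_mem).1 (hsr.trans_eq hs₀r.symm)⟩
  · intro s hs
    have hs_mem : s ∈ Icc 0 (ε / 4) := ⟨hs.1, hs.2.trans hs₀_mem.2⟩
    refine ⟨⟨hs.1, by linarith [hs_mem.2]⟩, ?_, mem_closedBall_iff_norm.2
      (((hmono.le_iff_le hs_mem hs₀_mem).2 hs.2).trans_eq hs₀r)⟩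
    obtain rfl | hpos := hs.1.eq_or_lt
    · rw [boundaryCurve_zero hE hε hp]
      exact mem_frontier_of_mem_extPairs hE hε hp
    · exact h s ⟨hpos, hs.2.trans hs₀.2⟩

theorem exists_Ioo_subset_compl_boundaryParams (hE : IsClosed E) (hε : 0 < ε)
    (h : ∃ᶠ s in 𝓝[>] 0, boundaryCurve E ε x p s ∉ frontier (eNbhd E ε)) (r : ℝ) :
    ∃ I : ℕ → ℝ × ℝ, (∀ n, (I n).1 < (I n).2) ∧
      (∀ n, Ioo (I n).1 (I n).2 ⊆ Icc 0 (ε / 2) \ boundaryParams E ε x p r) ∧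
      (Pairwise fun m n => Disjoint (Ioo (I m).1 (I m).2) (Ioo (I n).1 (I n).2)) ∧
      Tendsto (fun n => (I n).2) atTop (𝓝 0) := by
  obtain ⟨I, hlt, hsub, hdisj, hlim⟩ := exists_pairwise_disjoint_Ioo_tendsto
    (isOpen_Ioo.sdiff (isClosed_boundaryParams hE r))
    ((h.and_eventually (Ioo_mem_nhdsGT (half_pos hε))).mono
      fun s hs => ⟨hs.2, fun hmem => hs.1 hmem.2.1⟩)
  exact ⟨I, hlt, fun n => (hsub n).trans (sdiff_subset_sdiff_left Ioo_subset_Icc_self), hdisj, hlim⟩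

theorem eventually_forall_boundaryParams (hE : IsClosed E) (hε : 0 < ε) (x : Plane) :
    ∀ᶠ r in 𝓝[>] 0, ∀ p ∈ extPairs E ε x,
      (∃ s, 0 < s ∧ s ≤ ε / 2 ∧ boundaryParams E ε x p r = Icc 0 s) ∨
        ∃ᶠ s in 𝓝[>] 0, boundaryCurve E ε x p s ∉ frontier (eNbhd E ε) := by
  refine (extPairs_finite hE hε x).eventually_all.2 fun p hp => ?_
  by_cases hfreq : ∃ᶠ s in 𝓝[>] 0, boundaryCurve E ε x p s ∉ frontier (eNbhd E ε)
  · exact Eventually.of_forall fun r => Or.inr hfreq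
  obtain ⟨u, hu, hsub⟩ := mem_nhdsGT_iff_exists_Ioc_subset.1 (not_frequently.1 hfreq)
  filter_upwards [Ioc_mem_nhdsGT hu, Ioc_mem_nhdsGT (by positivity : 0 < ε / 4)] with r hru hrε
  exact Or.inl (boundaryParams_eq_Icc hE hε hp hrε fun s hs =>
    not_not.1 (hsub ⟨hs.1, hs.2.trans hru.2⟩))

theorem eventually_exists_boundaryCurve_eq (hE : IsClosed E) (hε : 0 < ε)
    (hx : x ∈ frontier (eNbhd E ε)) :
    ∀ᶠ z in 𝓝 x, z ∈ frontier (eNbhd E ε) →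
      ∃ p ∈ extPairs E ε x, ∃ s ∈ Icc 0 (ε / 2), boundaryCurve E ε x p s = z := by
  have hnear := eventually_nhdsWithin_iff.1
    (eventually_exists_extPairs_norm_sub_le (x := x) hE hε (by positivity : 0 < ε / 4))
  filter_upwards [hnear, closedBall_mem_nhds x (half_pos hε)] with z hz hzx hzE
  obtain rfl | hne := eq_or_ne z x
  · obtain ⟨p, hp⟩ := extPairs_nonempty hE hε hx
    exact ⟨p, hp, 0, left_mem_Icc.2 (by positivity), boundaryCurve_zero hE hε hp⟩
  rw [mem_closedBall_iff_norm] at hzx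
  obtain ⟨p, hp, w, hw, hwz, hnonneg, hwp⟩ := hz hne hzE
  have hle := le_of_abs_le (abs_inner_le_norm_of_norm_eq_one hp.1.1 (z - x))
  exact ⟨p, hp, _, ⟨hnonneg, hle.trans hzx⟩, eq_boundaryCurve_of_mem_frontier hE hε hp hzE
    (by linarith) ⟨hw, mem_closedBall_iff_norm.2 hwp⟩ hwz.le⟩

theorem eventually_frontier_inter_closedBall_eq (hE : IsClosed E) (hε : 0 < ε)
    (hx : x ∈ frontier (eNbhd E ε)) :
    ∀ᶠ r in 𝓝[>] 0, frontier (eNbhd E ε) ∩ closedBall x r =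
      ⋃ p ∈ extPairs E ε x, boundaryCurve E ε x p '' boundaryParams E ε x p r := by
  obtain ⟨ρ, hρ, hcover⟩ := nhds_basis_closedBall.mem_iff.1
    (eventually_exists_boundaryCurve_eq hE hε hx)
  filter_upwards [Ioc_mem_nhdsGT hρ] with r hr
  refine Subset.antisymm (fun z hz => ?_) (iUnion₂_subset fun p _ => ?_)
  · obtain ⟨p, hp, s, hs, rfl⟩ := hcover (closedBall_subset_closedBall hr.2 hz.2) hz.1
    exact mem_biUnion hp ⟨s, ⟨hs, hz⟩, rfl⟩
  · exact image_subset_iff.2 fun s hs => hs.2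

end Params

theorem local_boundary_representation_general (E : Set Plane) (hE : IsClosed E) {ε : ℝ}
    (hε : 0 < ε) (x : Plane) (hx : x ∈ frontier (eNbhd E ε)) :
    ∃ r > 0, ∃ F : Plane × Plane → ℝ → ℝ, ∃ A : Plane × Plane → Set ℝ,
      (∀ p ∈ extPairs E ε x,
        ContinuousOn (F p) (Icc 0 (ε / 2)) ∧
        LipschitzOnWith (Real.toNNReal (1 / (Real.sqrt 3 * ε))) (F p) (Icc 0 r) ∧
        IsClosed (A p) ∧ A p ⊆ Icc 0 (ε / 2) ∧
        LipschitzOnWith (Real.toNNReal (2 / Real.sqrt 3))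
          (fun s => x + s • p.1 + (F p s) • (x - p.2)) (Icc 0 r) ∧
        ((∃ s, 0 < s ∧ s ≤ ε / 2 ∧ A p = Icc 0 s) ∨
          (∃ I : ℕ → ℝ × ℝ, (∀ n, (I n).1 < (I n).2) ∧
            (∀ n, Ioo (I n).1 (I n).2 ⊆ Icc 0 (ε / 2) \ A p) ∧
            (Pairwise fun m n => Disjoint (Ioo (I m).1 (I m).2) (Ioo (I n).1 (I n).2)) ∧
            Tendsto (fun n => (I n).2) atTop (nhds 0)))) ∧
      (frontier (eNbhd E ε) ∩ closedBall x r =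
        ⋃ p ∈ extPairs E ε x, (fun s => x + s • p.1 + (F p s) • (x - p.2)) '' A p) ∧
      ((IsWedge E ε x ∨ x ∈ unp E ε) →
        ∀ p ∈ extPairs E ε x, ∃ s, 0 < s ∧ s ≤ ε / 2 ∧ A p = Icc 0 s) := by
  obtain ⟨r, hcover, hparams, hr⟩ := ((eventually_frontier_inter_closedBall_eq hE hε hx).and
    ((eventually_forall_boundaryParams hE hε x).and
      (Ioc_mem_nhdsGT (by positivity : 0 < ε / 4)))).exists
  have hsub : Icc 0 r ⊆ Icc 0 (ε / 4) := Icc_subset_Icc_right hr.2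
  refine ⟨r, hr.1, fun p s => ε⁻¹ * boundaryHeight E ε x p s,
    fun p => boundaryParams E ε x p r, fun p hp => ⟨?_, ?_, ?_, ?_, ?_, ?_⟩, hcover, ?_⟩
  · exact (continuous_const.mul (continuous_boundaryHeight hE)).continuousOn
  · exact (lipschitzOnWith_inv_mul_boundaryHeight hE hε hp).mono hsub
  · exact isClosed_boundaryParams hE r
  · exact sep_subset _ _
  · exact (lipschitzOnWith_boundaryCurve hE hε hp).mono hsub
  · exact (hparams p hp).imp_right fun h => exists_Ioo_subset_compl_boundaryParams hE hε h r
  · intro h p hp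
    have hmem := eventually_boundaryCurve_mem_frontier hE hε hp (antipode_notMem hE hε hp h)
    exact (hparams p hp).resolve_right (not_frequently.2 (hmem.mono fun _ => not_not.2))

/-- Local boundary representation: near `x`, the boundary `∂E_ε` is a finite union of
graphs of continuous (indeed Lipschitz) functions indexed by the extremal pairs. -/
theorem local_boundary_representation (E : Set Plane) (hE : IsCompact E) {ε : ℝ}
    (hε : 0 < ε) (x : Plane) (hx : x ∈ frontier (eNbhd E ε)) :
    ∃ r > 0, ∃ F : Plane × Plane → ℝ → ℝ, ∃ A : Plane × Plane → Set ℝ,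
      (∀ p ∈ extPairs E ε x,
        ContinuousOn (F p) (Icc 0 (ε / 2)) ∧
        LipschitzOnWith (Real.toNNReal (1 / (Real.sqrt 3 * ε))) (F p) (Icc 0 r) ∧
        IsClosed (A p) ∧ A p ⊆ Icc 0 (ε / 2) ∧
        LipschitzOnWith (Real.toNNReal (2 / Real.sqrt 3))
          (fun s => x + s • p.1 + (F p s) • (x - p.2)) (Icc 0 r) ∧
        ((∃ s, 0 < s ∧ s ≤ ε / 2 ∧ A p = Icc 0 s) ∨
          (∃ I : ℕ → ℝ × ℝ, (∀ n, (I n).1 < (I n).2) ∧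
            (∀ n, Ioo (I n).1 (I n).2 ⊆ Icc 0 (ε / 2) \ A p) ∧
            (Pairwise fun m n => Disjoint (Ioo (I m).1 (I m).2) (Ioo (I n).1 (I n).2)) ∧
            Tendsto (fun n => (I n).2) atTop (nhds 0)))) ∧
      (frontier (eNbhd E ε) ∩ closedBall x r =
        ⋃ p ∈ extPairs E ε x, (fun s => x + s • p.1 + (F p s) • (x - p.2)) '' A p) ∧
      ((IsWedge E ε x ∨ x ∈ unp E ε) →
        ∀ p ∈ extPairs E ε x, ∃ s, 0 < s ∧ s ≤ ε / 2 ∧ A p = Icc 0 s) :=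
  local_boundary_representation_general E hE.isClosed hε x hx

end
end

section
/- Let E ⊆ ℝ² be compact, ε > 0, x ∈ ∂E_ε, and let ξ₁, ξ₂ belong to the interior, relative to S¹, of Ξ_x(E_ε). Then there exists r > 0 such that the truncated open cone V_r(x, ξ₁, ξ₂) := {x + s·v : v ∈ (ξ₁, ξ₂)_{S¹}, 0 < s < r} is contained in the complement E_ε^c. -/
open Metric Set Filter Topology RealInnerProductSpace

noncomputable section

/-- The interior of a subset of the unit circle, relative to the circle. -/
def intS1 (X : Set Plane) : Set Plane :=
  {ξ ∈ X | ∃ δ > 0, ∀ η : Plane, ‖η‖ = 1 → dist η ξ < δ → η ∈ X}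

/-! Let `y ∈ closure E` be a point at distance `ε` from `x`. The complement of the `ε`-neighbourhood
contains no point closer to `y` than `x`, so Fermat's theorem on its tangent cone at `x` puts every
outward direction into the half-space `0 ≤ ⟪x - y, ·⟫`, and every interior outward direction into
the open half-space. By compactness these strict inequalities persist for all `y ∈ closure E` within
distance `ε + r` of `x`, for some `r > 0`. A point `x + s • v` of the truncated cone is at distance
`s < r` from `x`, so only such `y` could lie within `ε` of it; but `0 ≤ ⟪x - y, v⟫`, so moving from
`x` along `v` increases the distance to each of them, which is at least `ε` to begin with. -/

/-- The truncated open cone `V_r(x, A)` with apex `x` and height `r` over a set `A` of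
directions. It is the paper's `V_r(x, ξ₁, ξ₂)` when `A` is the open arc between `ξ₁` and `ξ₂`. -/
def truncatedCone {F : Type*} [AddCommGroup F] [Module ℝ F] (x : F) (A : Set F) (r : ℝ) : Set F :=
  {z | ∃ v ∈ A, ∃ s : ℝ, 0 < s ∧ s < r ∧ z = x + s • v}

section InnerProductSpace

variable {F : Type*} [NormedAddCommGroup F] [InnerProductSpace ℝ F] {x y v : F}

theorem dist_lt_dist_add_of_inner_nonneg (hv : v ≠ 0) (h : 0 ≤ ⟪v, x - y⟫) :
    dist x y < dist (x + v) y := by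
  rw [dist_eq_norm, dist_eq_norm, add_sub_right_comm]
  refine lt_of_pow_lt_pow_left₀ 2 (norm_nonneg _) ?_
  have hv' : 0 < ‖v‖ := norm_pos_iff.2 hv
  rw [norm_add_sq_real, real_inner_comm]
  nlinarith

theorem interior_setOf_inner_nonneg (hv : v ≠ 0) :
    interior {η | 0 ≤ ⟪v, η⟫} = {η | 0 < ⟪v, η⟫} := by
  have hopen : IsOpenMap (innerSL ℝ v) :=
    ContinuousLinearMap.isOpenMap_of_ne_zero _ fun h => hv <| by simpa using DFunLike.congr_fun h v
  have := hopen.preimage_interior_eq_interior_preimage (innerSL ℝ v).continuous (Ici 0)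
  rw [interior_Ici] at this
  exact this.symm

theorem inner_nonneg_of_mem_posTangentConeAt {s : Set F} (hs : ∀ u ∈ s, dist x y ≤ dist u y)
    {η : F} (hη : η ∈ posTangentConeAt s x) : 0 ≤ ⟪x - y, η⟫ := by
  have hmin : IsLocalMinOn (fun u => ‖u - y‖ ^ 2) s x :=
    eventually_mem_nhdsWithin.mono fun u hu => by
      simpa only [dist_eq_norm] using pow_le_pow_left₀ dist_nonneg (hs u hu) 2
  have hderiv := ((hasFDerivAt_id x).sub_const y).norm_sq.hasFDerivWithinAt (s := s)
  simpa [inner_sub_left] using hmin.hasFDerivWithinAt_nonneg hderiv hη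

theorem inner_pos_of_mem_interior_posTangentConeAt {s : Set F}
    (hs : ∀ u ∈ s, dist x y ≤ dist u y) (hxy : x ≠ y) {ξ : F}
    (hξ : ξ ∈ interior (posTangentConeAt s x)) : 0 < ⟪x - y, ξ⟫ := by
  have hsub : posTangentConeAt s x ⊆ {η | 0 ≤ ⟪x - y, η⟫} :=
    fun η => inner_nonneg_of_mem_posTangentConeAt hs
  have := interior_mono hsub hξ
  rwa [interior_setOf_inner_nonneg (sub_ne_zero.2 hxy)] at this

theorem isOpen_setOf_forall_inner_pos {K : Set F} (hK : IsCompact K) :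
    IsOpen {w : F | ∀ ξ ∈ K, 0 < ⟪w, ξ⟫} :=
  isOpen_iff_eventually.2 fun _ hw =>
    hK.eventually_forall_of_forall_eventually fun ξ hξ =>
      continuous_inner.continuousAt.eventually_const_lt (hw ξ hξ)

theorem inner_nonneg_of_mem_hull {K : Set F} {w : F} (hw : ∀ ξ ∈ K, 0 ≤ ⟪w, ξ⟫)
    (hv : v ∈ PointedCone.hull ℝ K) : 0 ≤ ⟪w, v⟫ := by
  have hdual : w ∈ PointedCone.dual (innerₗ F) (PointedCone.hull ℝ K : Set F) := by
    rw [PointedCone.dual_hull]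
    exact fun ξ hξ => by simpa only [innerₗ_apply_apply, real_inner_comm] using hw ξ hξ
  simpa only [innerₗ_apply_apply, real_inner_comm] using hdual hv

end InnerProductSpace

section ClosedNeighbourhood

theorem le_dist_of_mem_frontier_cthickening {X : Type*} [PseudoMetricSpace X] {E : Set X} {ε : ℝ}
    {x y : X} (hx : x ∈ frontier (cthickening ε E)) (hy : y ∈ closure E) : ε ≤ dist x y := by
  have hinf : infEDist x E = ENNReal.ofReal ε := frontier_cthickening_subset E hx
  rw [← ENNReal.ofReal_le_ofReal_iff dist_nonneg, ← edist_dist, ← hinf, ← infEDist_closure]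
  exact infEDist_le_edist_of_mem hy

theorem lt_dist_of_notMem_cthickening {X : Type*} [PseudoMetricSpace X] {E : Set X} {ε : ℝ}
    {u y : X} (hu : u ∉ cthickening ε E) (hy : y ∈ closure E) : ε < dist u y := by
  by_contra! h
  rw [← cthickening_closure] at hu
  exact hu (mem_cthickening_of_dist_le u y ε _ hy h)

theorem exists_disjoint_closedBall_add {F : Type*} [NormedAddCommGroup F] [NormedSpace ℝ F]
    [ProperSpace F] {t : Set F} (ht : IsClosed t) {x : F} {ε : ℝ} (hε : 0 ≤ ε)
    (h : Disjoint (closedBall x ε) t) : ∃ r > 0, Disjoint (closedBall x (ε + r)) t := by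
  obtain ⟨r, hr, hdisj⟩ := h.exists_cthickenings (isCompact_closedBall x ε) ht
  rw [cthickening_closedBall hr.le hε, add_comm] at hdisj
  exact ⟨r, hr, hdisj.mono_right (self_subset_cthickening t)⟩

variable {F : Type*} [NormedAddCommGroup F] [InnerProductSpace ℝ F] {E K : Set F} {ε : ℝ} {x : F}

theorem inner_pos_of_mem_interior_posTangentConeAt_compl_cthickening (hε : 0 < ε)
    (hx : x ∈ frontier (cthickening ε E)) {y ξ : F} (hy : y ∈ closure E) (hxy : dist x y ≤ ε)
    (hξ : ξ ∈ interior (posTangentConeAt (cthickening ε E)ᶜ x)) : 0 < ⟪x - y, ξ⟫ :=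
  inner_pos_of_mem_interior_posTangentConeAt
    (fun _ hu => hxy.trans (lt_dist_of_notMem_cthickening hu hy).le)
    (dist_pos.1 (hε.trans_le (le_dist_of_mem_frontier_cthickening hx hy))) hξ

theorem exists_forall_dist_le_inner_pos [ProperSpace F] (hε : 0 < ε)
    (hx : x ∈ frontier (cthickening ε E)) (hK : IsCompact K)
    (hKT : K ⊆ interior (posTangentConeAt (cthickening ε E)ᶜ x)) :
    ∃ r > 0, ∀ y ∈ closure E, dist x y ≤ ε + r → ∀ ξ ∈ K, 0 < ⟪x - y, ξ⟫ := by
  let U : Set F := {y | ∀ ξ ∈ K, 0 < ⟪x - y, ξ⟫}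
  have hU : IsOpen U :=
    (isOpen_setOf_forall_inner_pos hK).preimage (continuous_const.sub continuous_id)
  have hnear : Disjoint (closedBall x ε) (closure E \ U) :=
    disjoint_left.2 fun y hxy hy => hy.2 fun ξ hξ =>
      inner_pos_of_mem_interior_posTangentConeAt_compl_cthickening hε hx hy.1
        (mem_closedBall'.1 hxy) (hKT hξ)
  obtain ⟨r, hr, hdisj⟩ :=
    exists_disjoint_closedBall_add (isClosed_closure.sdiff hU) hε.le hnear
  refine ⟨r, hr, fun y hy hxy => ?_⟩
  by_contra hyU
  exact disjoint_left.1 hdisj (mem_closedBall'.2 hxy) ⟨hy, hyU⟩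

theorem truncated_cone_in_complement_general [ProperSpace F] (hε : 0 < ε)
    (hx : x ∈ frontier (cthickening ε E)) (hK : IsCompact K)
    (hKT : K ⊆ interior (posTangentConeAt (cthickening ε E)ᶜ x)) :
    ∃ r > 0, truncatedCone x (sphere 0 1 ∩ PointedCone.hull ℝ K) r ⊆ (cthickening ε E)ᶜ := by
  obtain ⟨r, hr, hpos⟩ := exists_forall_dist_le_inner_pos hε hx hK hKT
  refine ⟨r, hr, ?_⟩
  rintro _ ⟨v, ⟨hv, hvK⟩, s, hs, hsr, rfl⟩ hz
  rw [cthickening_eq_biUnion_closedBall E hε.le, mem_iUnion₂] at hz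
  obtain ⟨y, hy, hzy⟩ := hz
  have hxz : dist x (x + s • v) = s := by
    rw [dist_self_add_right, norm_smul_of_nonneg hs.le, mem_sphere_zero_iff_norm.1 hv, mul_one]
  have hxy : dist x y ≤ ε + r := by
    linarith [dist_triangle x (x + s • v) y, mem_closedBall.1 hzy]
  have hinner : 0 ≤ ⟪s • v, x - y⟫ := by
    rw [real_inner_smul_left, real_inner_comm]
    exact mul_nonneg hs.le (inner_nonneg_of_mem_hull (fun ξ hξ => (hpos y hy hxy ξ hξ).le) hvK)
  have hsv : s • v ≠ 0 := smul_ne_zero hs.ne' (ne_zero_of_mem_unit_sphere ⟨v, hv⟩)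
  refine (mem_closedBall.1 hzy).not_gt ?_
  exact (le_dist_of_mem_frontier_cthickening hx hy).trans_lt
    (dist_lt_dist_add_of_inner_nonneg hsv hinner)

end ClosedNeighbourhood

section Plane

variable {E : Set Plane} {ε : ℝ} {x : Plane}

theorem eNbhd_eq_cthickening (hε : 0 < ε) (E : Set Plane) : eNbhd E ε = cthickening ε E := by
  rw [eNbhd, ← thickening_eq_biUnion_ball, closure_thickening hε]

theorem arcSeg_subset_sphere_inter_hull (v w : Plane) :
    arcSeg v w ⊆ sphere 0 1 ∩ PointedCone.hull ℝ {v, w} := by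
  rintro u ⟨hu, a, b, ha, hb, rfl⟩
  exact ⟨mem_sphere_zero_iff_norm.2 hu, Submodule.mem_span_pair.2 ⟨⟨a, ha⟩, ⟨b, hb⟩, rfl⟩⟩

theorem smul_mem_posTangentConeAt_of_mem_outwardDirs {η : Plane} (hη : η ∈ outwardDirs E ε x)
    (t : NNReal) : t • η ∈ posTangentConeAt (eNbhd E ε)ᶜ x := by
  obtain ⟨-, u, hu, hux, hdir⟩ := hη
  refine mem_tangentConeAt_of_seq atTop (fun n => t * ‖u n - x‖₊⁻¹) (fun n => u n - x)
    (tendsto_sub_nhds_zero_iff.2 hux) (.of_forall fun n => ?_) ?_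
  · simpa using hu n
  · simpa only [NNReal.smul_def, NNReal.coe_mul, mul_smul, NNReal.coe_inv, coe_nnnorm] using
      hdir.const_smul t

theorem intS1_outwardDirs_subset_interior_posTangentConeAt :
    intS1 (outwardDirs E ε x) ⊆ interior (posTangentConeAt (eNbhd E ε)ᶜ x) := by
  rintro ξ ⟨⟨hξ, -⟩, δ, hδ, hball⟩
  have hξ0 : ξ ≠ 0 := norm_ne_zero_iff.1 (hξ ▸ one_ne_zero)
  have hnormalize : Tendsto (fun η : Plane => ‖η‖⁻¹ • η) (𝓝 ξ) (𝓝 ξ) := by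
    have : ContinuousAt (fun η : Plane => ‖η‖⁻¹ • η) ξ := by fun_prop (disch := simpa)
    simpa [ContinuousAt, hξ] using this
  rw [mem_interior_iff_mem_nhds]
  filter_upwards [hnormalize.eventually (ball_mem_nhds ξ hδ), eventually_ne_nhds hξ0]
    with η hηδ hη0
  have hηout := hball _ (norm_smul_inv_norm (𝕜 := ℝ) hη0) hηδ
  rw [← smul_inv_smul₀ (norm_ne_zero_iff.2 hη0) η]
  exact smul_mem_posTangentConeAt_of_mem_outwardDirs hηout ‖η‖₊

end Plane

/-- Approximations of the outward cone: a truncated open cone over an open arc between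
two interior outward directions lies in the complement of `E_ε`. -/
theorem truncated_cone_in_complement (E : Set Plane) (hE : IsCompact E) {ε : ℝ}
    (hε : 0 < ε) (x : Plane) (hx : x ∈ frontier (eNbhd E ε)) (ξ₁ ξ₂ : Plane)
    (h₁ : ξ₁ ∈ intS1 (outwardDirs E ε x)) (h₂ : ξ₂ ∈ intS1 (outwardDirs E ε x)) :
    ∃ r > 0,
      {z : Plane | ∃ v ∈ openArc ξ₁ ξ₂, ∃ s : ℝ, 0 < s ∧ s < r ∧ z = x + s • v} ⊆
        (eNbhd E ε)ᶜ := by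
  have hK := (pair_subset h₁ h₂).trans intS1_outwardDirs_subset_interior_posTangentConeAt
  rw [eNbhd_eq_cthickening hε] at hx hK ⊢
  obtain ⟨r, hr, hcone⟩ := truncated_cone_in_complement_general hε hx (toFinite _).isCompact hK
  exact ⟨r, hr, fun _ ⟨v, hv, hs⟩ => hcone ⟨v, arcSeg_subset_sphere_inter_hull ξ₁ ξ₂ hv.1, hs⟩⟩

end
end
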